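/- arXiv:1908.08491 — 3 statements merged into one kernel-verified Lean document; each statement's English description precedes it below -/
import Mathlib

section
/- For every l ≥ 1, the polynomial P_l(u,v) ∈ ℂ[u,v] defined by det(H_l + λ·Id) = P_l(λ, μ²), where H_l is the l×l tridiagonal matrix with diagonal entries (1-j)(l-j+1), superdiagonal entries μj, subdiagonal entries μ(l-j+1), is irreducible in ℂ[u,v]. -/
open MvPolynomial Matrix

/-!
Over `v = 0` the curve `P_l(u, v) = 0` consists of the points `u = c_m = m (l - m)`, `0 ≤ m < l`,
and the inverse slopes `s` of its branches `u = c_m + s v + ⋯` are given by second-order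
perturbation theory. They are negative rational numbers, except possibly at two of the points. The
point `c_⌊l/2⌋` is a smooth point of the curve, hence lies on only one factor of `P_l`. For even
`l = 2n` with `n ≥ 2`, the two branches at `c_{n - 1}` have inverse slopes `e ± √κ` with `e < 0`
rational and `κ = n² (n² - 1)` not the square of a rational number.

Let `R` be a factor of `P_l` not passing through `c_⌊l/2⌋`. Giving `u` the weight `1` and `v` the
weight `2`, one finds that `R₁`, the coefficient of `v` in `R`, has degree at most `deg R₀ - 2`, so
the residues of `R₁ / R₀` sum to zero. The residue at `c_m` is minus the sum of the inverse slopes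
of the branches of `R` there. These are positive rational numbers except for at most one irrational
number, so there are none of them: `R₀` is constant, and by the weights so is `R`.
-/

namespace DoubleConfluentHeun

open Polynomial
open scoped Polynomial.Bivariate

local notation "X" => Polynomial.X
local notation "C" => Polynomial.C

section Residue

variable {K : Type*} [Field K]

theorem pow_rootMultiplicity_dvd_divByMonic {p : K[X]} {a b : K} (ha : p.IsRoot a) (hab : a ≠ b) :
    (X - C b) ^ p.rootMultiplicity b ∣ p /ₘ (X - C a) := by
  have hcop : IsCoprime ((X - C b) ^ p.rootMultiplicity b) (X - C a) :=
    (isCoprime_X_sub_C_of_isUnit_sub (sub_ne_zero.2 hab.symm).isUnit).pow_left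
  refine hcop.dvd_of_dvd_mul_left ?_
  rw [mul_divByMonic_eq_iff_isRoot.2 ha]
  exact pow_rootMultiplicity_dvd p b

theorem eq_zero_of_pow_rootMultiplicity_dvd {p f : K[X]} (hp : p.Splits)
    (hdeg : f.degree < p.degree)
    (h : ∀ a, p.IsRoot a → (X - C a) ^ p.rootMultiplicity a ∣ f) : f = 0 := by
  classical
  by_contra hf
  have hp0 : p ≠ 0 := by rintro rfl; simp at hdeg
  refine hf (eq_zero_of_dvd_of_degree_lt (hp.dvd_of_roots_le_roots hp0 ?_) hdeg)
  refine Multiset.le_iff_count.2 fun a => ?_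
  rw [count_roots, count_roots]
  by_cases ha : p.IsRoot a
  · exact (le_rootMultiplicity_iff hf).2 (h a ha)
  · simp [rootMultiplicity_eq_zero ha]

/- Partial fractions: the hypothesis on `r` says that `q / p` has at most simple poles, with residue
`r a` at `a`, and the sum of the residues is minus the residue at infinity. -/
theorem sum_residues_eq_zero [DecidableEq K] {p q : K[X]} {r : K → K} (hp : p.Splits)
    (hdeg : q.degree < (p.natDegree - 1 : ℕ))
    (hr : ∀ a, p.IsRoot a →
      (X - C a) ^ (p.rootMultiplicity a + 1) ∣ (X - C a) * q - C (r a) * p) :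
    ∑ a ∈ p.roots.toFinset, r a = 0 := by
  by_cases hp0 : p.degree ≤ 0
  · rw [eq_C_of_degree_le_zero hp0, roots_C, Multiset.toFinset_zero, Finset.sum_empty]
  have hp_ne : p ≠ 0 := by rintro rfl; simp at hp0
  have mem_roots : ∀ a, a ∈ p.roots.toFinset ↔ p.IsRoot a := by simp [hp_ne]
  have hF : q - ∑ a ∈ p.roots.toFinset, C (r a) * (p /ₘ (X - C a)) = 0 := by
    refine eq_zero_of_pow_rootMultiplicity_dvd hp ?_ fun a ha => ?_
    · simp_rw [← Polynomial.smul_eq_C_mul]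
      rw [degree_eq_natDegree hp_ne]
      refine mem_degreeLT.1 (sub_mem (mem_degreeLT.2 (hdeg.trans_le ?_))
        (sum_mem fun a _ => Submodule.smul_mem _ _ (mem_degreeLT.2 ?_)))
      · exact_mod_cast Nat.sub_le _ _
      · rw [← degree_eq_natDegree hp_ne]
        exact degree_divByMonic_lt _ _ hp_ne (by simp)
    rw [← Finset.add_sum_erase _ _ ((mem_roots a).2 ha), ← sub_sub]
    refine dvd_sub ((mul_dvd_mul_iff_left (X_sub_C_ne_zero a)).1 ?_)
      (Finset.dvd_sum fun b hb => ?_)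
    · rw [← pow_succ', mul_sub, mul_left_comm, mul_divByMonic_eq_iff_isRoot.2 ha]
      exact hr a ha
    · obtain ⟨hne, hb⟩ := Finset.mem_erase.1 hb
      exact (pow_rootMultiplicity_dvd_divByMonic ((mem_roots b).1 hb) hne).mul_left _
  have coeff_quot : ∀ a, (p /ₘ (X - C a)).coeff (p.natDegree - 1) = p.leadingCoeff := fun a => by
    rw [← leadingCoeff_divByMonic_X_sub_C p (fun h => hp0 h.le) a, leadingCoeff,
      natDegree_divByMonic _ (monic_X_sub_C a), natDegree_X_sub_C]
  have := congrArg (fun f => f.coeff (p.natDegree - 1)) hF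
  simpa [coeff_quot, coeff_eq_zero_of_degree_lt hdeg, ← Finset.sum_mul, Polynomial.coeff_C_mul,
    hp_ne] using this

end Residue

section Continuant

variable {S T : Type*} [CommRing S] [CommRing T]

/-- The tridiagonal matrix of size `n` whose row `i` is `c i, a i, b i`. -/
def tridiagonal (a b c : ℕ → S) (n : ℕ) : Matrix (Fin n) (Fin n) S :=
  Matrix.of fun i j => if (i : ℕ) = j then a i else if (i : ℕ) + 1 = j then b i
    else if (j : ℕ) + 1 = i then c i else 0

/-- The continuant of size `n`: the determinant of a tridiagonal matrix with diagonal `a 0, a 1, …`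
in which `w m` is the product of the two off-diagonal entries coupling the sites `m - 1` and `m`.
The value `w 0` does not enter. -/
def continuant (a w : ℕ → S) : ℕ → S
  | 0 => 1
  | 1 => a 0
  | n + 2 => a (n + 1) * continuant a w (n + 1) - w (n + 1) * continuant a w n

theorem map_continuant (f : S →+* T) (a w : ℕ → S) :
    ∀ n, f (continuant a w n) = continuant (f ∘ a) (f ∘ w) n
  | 0 => map_one f
  | 1 => rfl
  | n + 2 => by
    simp only [continuant, map_sub, map_mul, map_continuant f a w (n + 1), map_continuant f a w n,
      Function.comp_apply]

theorem continuant_succ {a w : ℕ → S} (hw : w 0 = 0) :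
    ∀ n, continuant a w (n + 1) = a n * continuant a w n - w n * continuant a w (n - 1)
  | 0 => by simp [continuant, hw]
  | _ + 1 => rfl

theorem det_tridiagonal_deleteRow (a b c : ℕ → S) (n : ℕ) :
    ((tridiagonal a b c (n + 2)).submatrix (Fin.last (n + 1)).succAbove
      (Fin.last n).castSucc.succAbove).det = b n * (tridiagonal a b c n).det := by
  rw [det_succ_column _ (Fin.last n), Fin.sum_univ_castSucc, Finset.sum_eq_zero, zero_add]
  · have minor : ((tridiagonal a b c (n + 2)).submatrix (Fin.last (n + 1)).succAbove
        (Fin.last n).castSucc.succAbove).submatrix (Fin.last n).succAbove (Fin.last n).succAbove =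
        tridiagonal a b c n := by
      ext i j
      have : (Fin.last n).castSucc.succAbove j.castSucc = j.castSucc.castSucc :=
        Fin.succAbove_of_castSucc_lt _ _ (by simp [Fin.lt_def])
      simp [tridiagonal, this]
    rw [minor]
    simp [tridiagonal, ← two_mul]
  · intro i _
    have h₁ : (i : ℕ) ≠ n + 1 := by omega
    have h₂ : (i : ℕ) ≠ n := by omega
    have h₃ : n + 1 + 1 ≠ (i : ℕ) := by omega
    simp [tridiagonal, h₁, h₂, h₃]

theorem det_tridiagonal_add_two (a b c : ℕ → S) (n : ℕ) :
    (tridiagonal a b c (n + 2)).det = a (n + 1) * (tridiagonal a b c (n + 1)).det -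
      b n * c (n + 1) * (tridiagonal a b c n).det := by
  have minor : (tridiagonal a b c (n + 2)).submatrix (Fin.last (n + 1)).succAbove
      (Fin.last (n + 1)).succAbove = tridiagonal a b c (n + 1) := by
    ext i j
    simp [tridiagonal]
  rw [det_succ_row _ (Fin.last (n + 1)), Fin.sum_univ_castSucc, Fin.sum_univ_castSucc,
    Finset.sum_eq_zero, zero_add, minor, det_tridiagonal_deleteRow]
  · have sign : (-1 : S) ^ (n + 1 + n) = -1 := Odd.neg_one_pow ⟨n, by ring⟩
    have h : n + 1 + 1 ≠ n := by omega
    simp only [tridiagonal, of_apply, Fin.val_last, Fin.val_castSucc, Nat.succ_eq_add_one, sign,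
      ← two_mul, Nat.add_eq_left, one_ne_zero, h, ↓reduceIte, even_two, Even.mul_right,
      Even.neg_pow, one_pow]
    ring
  · intro i _
    have h₁ : n + 1 ≠ (i : ℕ) := by omega
    have h₂ : n + 1 + 1 ≠ (i : ℕ) := by omega
    have h₃ : (i : ℕ) ≠ n := by omega
    simp [tridiagonal, h₁, h₂, h₃]

theorem det_tridiagonal {a b c w : ℕ → S} (hw : ∀ n, w (n + 1) = b n * c (n + 1)) :
    ∀ n, (tridiagonal a b c n).det = continuant a w n
  | 0 => det_isEmpty
  | 1 => det_unique _
  | n + 2 => by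
    rw [det_tridiagonal_add_two, det_tridiagonal hw (n + 1), det_tridiagonal hw n, continuant, hw]

theorem coeff_zero_continuant {a w : ℕ → S[X]} (hw : ∀ m, (w m).coeff 0 = 0) :
    ∀ n, (continuant a w n).coeff 0 = ∏ m ∈ Finset.range n, (a m).coeff 0
  | 0 => by simp [continuant]
  | 1 => by simp [continuant]
  | n + 2 => by
    rw [continuant, Polynomial.coeff_sub, mul_coeff_zero, mul_coeff_zero, hw, zero_mul, sub_zero,
      coeff_zero_continuant hw (n + 1), Finset.prod_range_succ _ (n + 1), mul_comm]

theorem natDegree_continuant_le {a w : ℕ → S[X]}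
    (ha : ∀ m, (a m).natDegree ≤ 1) (hw : ∀ m, (w m).natDegree ≤ 2) :
    ∀ n, (continuant a w n).natDegree ≤ n
  | 0 => natDegree_one.le
  | 1 => ha 0
  | n + 2 => by
    have h₁ := natDegree_mul_le_of_le (ha (n + 1)) (natDegree_continuant_le ha hw (n + 1))
    have h₂ := natDegree_mul_le_of_le (hw (n + 1)) (natDegree_continuant_le ha hw n)
    exact (natDegree_sub_le _ _).trans (max_le (h₁.trans (by omega)) (h₂.trans (by omega)))

end Continuant

section BlowUp

variable {K : Type*}

/-- The substitution `u = c + s t`, `v = t` taking a polynomial in `u` (inner variable) and `v`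
(outer variable) to one in `s` (inner) and `t` (outer). It is the blow-up of the plane at `(c, 0)`
in the chart where `s` is the inverse slope of a line through `(c, 0)`. -/
noncomputable def blowUp [CommRing K] (c : K) : K[X][Y] →+* K[X][Y] :=
  eval₂RingHom (Polynomial.aeval (R := K) (C (C c) + C X * Y)).toRingHom Y

section CommRing

variable [CommRing K] (c : K)

theorem coeff_aeval_C_X_mul_Y (p : K[X]) (n : ℕ) :
    (Polynomial.aeval (C X * Y : K[X][Y]) p).coeff n = monomial n (p.coeff n) := by
  induction p using Polynomial.induction_on' with
  | add p q hp hq => simp [hp, hq]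
  | monomial m a =>
    rw [Polynomial.aeval_monomial, mul_pow, ← Polynomial.C_pow, Polynomial.algebraMap_apply,
      ← mul_assoc, ← Polynomial.C_mul, coeff_C_mul_X_pow, Polynomial.coeff_monomial,
      Polynomial.algebraMap_eq, Polynomial.C_mul_X_pow_eq_monomial]
    split_ifs <;> simp_all

theorem coeff_blowUp_C (p : K[X]) (n : ℕ) :
    (blowUp c (C p)).coeff n = monomial n ((taylor c p).coeff n) := by
  rw [← coeff_aeval_C_X_mul_Y, taylor_apply, aeval_comp]
  simp [blowUp, add_comm]

theorem coeff_coeff_blowUp (F : K[X][Y]) (n k : ℕ) :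
    ((blowUp c F).coeff n).coeff k =
      if k ≤ n then (taylor c (F.coeff (n - k))).coeff k else 0 := by
  induction F using Polynomial.induction_on' with
  | add F G hF hG => simp only [map_add, Polynomial.coeff_add, hF, hG]; split_ifs <;> simp
  | monomial j p =>
    have hY : blowUp c Y = Y := by simp [blowUp]
    rw [← Polynomial.C_mul_X_pow_eq_monomial, map_mul, map_pow, hY, coeff_mul_X_pow',
      coeff_C_mul_X_pow, coeff_blowUp_C]
    by_cases hjk : n = j + k
    · simp [hjk]
    · split_ifs <;> first | omega | simp [Polynomial.coeff_monomial] <;> omega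

theorem natDegree_coeff_blowUp_le (F : K[X][Y]) (n : ℕ) : ((blowUp c F).coeff n).natDegree ≤ n :=
  natDegree_le_iff_coeff_eq_zero.2 fun k hk => by rw [coeff_coeff_blowUp, if_neg hk.not_ge]

theorem coeff_blowUp_self (F : K[X][Y]) (n : ℕ) :
    ((blowUp c F).coeff n).coeff n = (taylor c (F.coeff 0)).coeff n := by
  simp [coeff_coeff_blowUp]

theorem coeff_blowUp_succ (F : K[X][Y]) (n : ℕ) :
    ((blowUp c F).coeff (n + 1)).coeff n = (taylor c (F.coeff 1)).coeff n := by
  simp [coeff_coeff_blowUp]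

theorem coeff_zero_blowUp (F : K[X][Y]) :
    (blowUp c F).coeff 0 = C ((F.coeff 0).eval c) := by
  rw [eq_C_of_natDegree_le_zero (natDegree_coeff_blowUp_le c F 0), coeff_blowUp_self,
    taylor_coeff_zero]

theorem coeff_one_blowUp_mul_eq_zero {c : K} {Q R : K[X][Y]} (hQ : (Q.coeff 0).IsRoot c)
    (hR : (R.coeff 0).IsRoot c) : (blowUp c (Q * R)).coeff 1 = 0 := by
  rw [map_mul, mul_coeff_one, coeff_zero_blowUp, coeff_zero_blowUp, hQ.eq_zero, hR.eq_zero]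
  simp

end CommRing

variable [Field K] {c : K} {F Q R : K[X][Y]}

/-- The tangent cone at `(c, 0)` of the curve `F = 0`: the lowest-order part of `F` there, written
as a polynomial in the inverse slope. -/
noncomputable def tangentCone (c : K) (F : K[X][Y]) : K[X] :=
  (blowUp c F).trailingCoeff

/-- The residue at `c` of `(∂F/∂v) / F` along the line `v = 0`, for a curve `F = 0` none of whose
branches at `(c, 0)` is tangent to that line. It is minus the sum of the inverse slopes of the
branches, which are the roots of the tangent cone. -/
noncomputable def residue (c : K) (F : K[X][Y]) : K :=
  (tangentCone c F).nextCoeff / (tangentCone c F).leadingCoeff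

/-- No branch of the curve `F = 0` through `(c, 0)` is tangent to the line `v = 0`: the coefficient
of the highest conceivable power of the inverse slope in the tangent cone does not vanish. -/
def IsTransversal (c : K) (F : K[X][Y]) : Prop :=
  (tangentCone c F).coeff (blowUp c F).natTrailingDegree ≠ 0

theorem tangentCone_mul : tangentCone c (Q * R) = tangentCone c Q * tangentCone c R := by
  rw [tangentCone, map_mul, trailingCoeff_mul]; rfl

theorem IsTransversal.blowUp_ne_zero (h : IsTransversal c F) : blowUp c F ≠ 0 := by
  intro h0
  simp [IsTransversal, tangentCone, h0] at h

theorem natDegree_tangentCone_le :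
    (tangentCone c F).natDegree ≤ (blowUp c F).natTrailingDegree :=
  natDegree_coeff_blowUp_le c F _

theorem IsTransversal.natDegree_tangentCone (h : IsTransversal c F) :
    (tangentCone c F).natDegree = (blowUp c F).natTrailingDegree :=
  natDegree_tangentCone_le.antisymm (le_natDegree_of_ne_zero h)

theorem IsTransversal.of_mul_right (h : IsTransversal c (Q * R)) : IsTransversal c R := by
  have h0 := h.blowUp_ne_zero
  rw [map_mul] at h0
  rw [IsTransversal, tangentCone_mul, map_mul,
    natTrailingDegree_mul (left_ne_zero_of_mul h0) (right_ne_zero_of_mul h0),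
    coeff_mul_add_eq_of_natDegree_le natDegree_tangentCone_le natDegree_tangentCone_le] at h
  exact right_ne_zero_of_mul h

theorem isTransversal_of_coeff {n : ℕ} (hlt : ∀ m < n, (blowUp c F).coeff m = 0)
    (hn : ((blowUp c F).coeff n).coeff n ≠ 0) :
    IsTransversal c F ∧ tangentCone c F = (blowUp c F).coeff n := by
  have hne : (blowUp c F).coeff n ≠ 0 := fun h => hn (by simp [h])
  have horder : (blowUp c F).natTrailingDegree = n :=
    (natTrailingDegree_le_of_ne_zero hne).antisymm
      (le_natTrailingDegree (fun h => hne (by simp [h])) hlt)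
  have hcone : tangentCone c F = (blowUp c F).coeff n := by
    rw [tangentCone, trailingCoeff, horder]
  exact ⟨by rwa [IsTransversal, hcone, horder], hcone⟩

theorem IsTransversal.rootMultiplicity (h : IsTransversal c F) :
    (F.coeff 0).rootMultiplicity c = (blowUp c F).natTrailingDegree := by
  rw [rootMultiplicity_eq_natTrailingDegree, ← taylor_apply]
  have hne : (taylor c (F.coeff 0)).coeff (blowUp c F).natTrailingDegree ≠ 0 := by
    rw [← coeff_blowUp_self]
    exact h
  refine (natTrailingDegree_le_of_ne_zero hne).antisymm
    (le_natTrailingDegree (fun h => hne (by simp [h])) fun n hn => ?_)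
  rw [← coeff_blowUp_self, coeff_eq_zero_of_lt_natTrailingDegree hn, Polynomial.coeff_zero]

theorem IsTransversal.natDegree_tangentCone_pos (h : IsTransversal c F)
    (hc : (F.coeff 0).IsRoot c) : 0 < (tangentCone c F).natDegree := by
  have h0 : F.coeff 0 ≠ 0 := by
    intro h0
    have := h
    rw [IsTransversal, tangentCone, trailingCoeff, coeff_blowUp_self, h0] at this
    simp at this
  rwa [h.natDegree_tangentCone, ← h.rootMultiplicity, rootMultiplicity_pos h0]

theorem IsTransversal.pow_dvd_sub_residue (h : IsTransversal c F) (hc : (F.coeff 0).IsRoot c) :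
    (X - C c) ^ ((F.coeff 0).rootMultiplicity c + 1) ∣
      (X - C c) * F.coeff 1 - C (residue c F) * F.coeff 0 := by
  have hpos := h.natDegree_tangentCone_pos hc
  rw [X_sub_C_pow_dvd_iff, ← taylor_apply, X_pow_dvd_iff, h.rootMultiplicity]
  intro n hn
  have htaylor : taylor c ((X - C c) * F.coeff 1) = X * taylor c (F.coeff 1) := by simp
  rw [map_sub, htaylor, taylor_mul, taylor_C, Polynomial.coeff_sub, Polynomial.coeff_C_mul,
    ← coeff_blowUp_self]
  obtain _ | n := n
  · simp [coeff_zero_blowUp, hc.eq_zero]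
  rw [Polynomial.coeff_X_mul, ← coeff_blowUp_succ]
  obtain hlt | heq := (Nat.lt_succ_iff.1 hn).lt_or_eq
  · simp [coeff_eq_zero_of_lt_natTrailingDegree hlt]
  · have hnat := h.natDegree_tangentCone
    rw [residue, nextCoeff_of_natDegree_pos hpos, leadingCoeff, hnat, tangentCone, trailingCoeff,
      ← heq, Nat.add_sub_cancel, div_mul_cancel₀, sub_self]
    rw [heq]
    exact h

end BlowUp

section WeightedDegree

variable {K : Type*} [Field K]

/-- The substitution `F(u, v) ↦ F(t, s t²)`, with `u`, `s` the inner and `v`, `t` the outer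
variables: the degree in `t` of the result is the degree of `F` when `u` has weight `1` and `v` has
weight `2`. -/
noncomputable def weightHom : K[X][Y] →+* K[X][Y] :=
  eval₂RingHom (mapRingHom C) (C X * Y ^ 2)

/-- The degree of a polynomial in `u` (inner variable, weight `1`) and `v` (outer variable,
weight `2`). -/
noncomputable def weightedDegree (F : K[X][Y]) : ℕ :=
  (weightHom F).natDegree

theorem coeff_coeff_weightHom (F : K[X][Y]) (m j : ℕ) :
    ((weightHom F).coeff m).coeff j = if 2 * j ≤ m then (F.coeff j).coeff (m - 2 * j) else 0 := by
  induction F using Polynomial.induction_on' with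
  | add F G hF hG => simp only [map_add, Polynomial.coeff_add, hF, hG]; split_ifs <;> simp
  | monomial i p =>
    rw [weightHom, coe_eval₂RingHom, Polynomial.eval₂_monomial, mul_pow, ← pow_mul,
      ← Polynomial.C_pow, ← mul_assoc, coeff_mul_X_pow', Polynomial.coeff_mul_C, coe_mapRingHom,
      Polynomial.coeff_map, Polynomial.coeff_monomial]
    by_cases hij : i = j
    · subst hij
      simp only [if_true]
      split_ifs <;> simp
    · split_ifs <;> simp [Polynomial.coeff_X_pow, Ne.symm hij]

theorem weightHom_injective : Function.Injective (weightHom : K[X][Y] →+* K[X][Y]) := by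
  refine (injective_iff_map_eq_zero _).2 fun F hF => ?_
  ext j m
  simpa [hF] using (coeff_coeff_weightHom F (m + 2 * j) j).symm

theorem add_le_weightedDegree {F : K[X][Y]} {j m : ℕ} (h : (F.coeff j).coeff m ≠ 0) :
    m + 2 * j ≤ weightedDegree F := by
  refine le_natDegree_of_ne_zero fun h0 => h ?_
  simpa [h0] using (coeff_coeff_weightHom F (m + 2 * j) j).symm

theorem natDegree_coeff_zero_le_weightedDegree (F : K[X][Y]) :
    (F.coeff 0).natDegree ≤ weightedDegree F :=
  natDegree_le_iff_coeff_eq_zero.2 fun _ hm => by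
    by_contra h
    exact hm.not_ge (add_le_weightedDegree h)

theorem weightedDegree_mul {Q R : K[X][Y]} (hQ : Q ≠ 0) (hR : R ≠ 0) :
    weightedDegree (Q * R) = weightedDegree Q + weightedDegree R := by
  rw [weightedDegree, map_mul, natDegree_mul]
  · rfl
  · simpa [map_eq_zero_iff _ weightHom_injective]
  · simpa [map_eq_zero_iff _ weightHom_injective]

theorem weightedDegree_le_of_mul {Q R : K[X][Y]} (h0 : (Q * R).coeff 0 ≠ 0)
    (h : weightedDegree (Q * R) ≤ ((Q * R).coeff 0).natDegree) :
    weightedDegree R ≤ (R.coeff 0).natDegree := by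
  rw [mul_coeff_zero] at h h0
  have hQ := left_ne_zero_of_mul h0
  have hR := right_ne_zero_of_mul h0
  rw [weightedDegree_mul (fun h => hQ (by simp [h])) (fun h => hR (by simp [h])),
    natDegree_mul hQ hR] at h
  have := natDegree_coeff_zero_le_weightedDegree Q
  omega

theorem degree_coeff_one_lt {F : K[X][Y]} (h : weightedDegree F ≤ (F.coeff 0).natDegree) :
    (F.coeff 1).degree < ((F.coeff 0).natDegree - 1 : ℕ) := by
  refine (degree_lt_iff_coeff_zero _ _).2 fun m hm => ?_
  by_contra hne
  have := add_le_weightedDegree hne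
  omega

theorem isUnit_of_weightedDegree_eq_zero {F : K[X][Y]} (h0 : F ≠ 0) (h : weightedDegree F = 0) :
    IsUnit F := by
  have hv : F.natDegree ≤ 0 := natDegree_le_iff_coeff_eq_zero.2 fun j hj => by
    by_contra hne
    obtain ⟨m, hm⟩ : ∃ m, (F.coeff j).coeff m ≠ 0 := by
      simpa [Polynomial.ext_iff] using hne
    have := add_le_weightedDegree hm
    omega
  have hu : (F.coeff 0).natDegree ≤ 0 := (natDegree_coeff_zero_le_weightedDegree F).trans h.le
  rw [eq_C_of_natDegree_le_zero hv, eq_C_of_natDegree_le_zero hu] at h0 ⊢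
  exact ((isUnit_iff_ne_zero.2 (by simpa using h0)).map C).map C

end WeightedDegree

section Perturbation

open Finset

variable {K : Type*} [Field K] (α w : ℕ → K)

/-- The continuant with diagonal entries `α m + s t` and couplings `w m t`, as a polynomial in `s`
(inner variable) and `t` (outer variable). In the expansion in `t`, the sites with `α m = 0` are the
levels whose first-order shifts `s` are sought. -/
noncomputable def levelContinuant (n : ℕ) : K[X][Y] :=
  continuant (fun m => C (C (α m)) + C X * Y) (fun m => C (C (w m)) * Y) n

/-- The shift of level `i` in second-order perturbation theory: each neighbour `m < n` of the site
`i` contributes the coupling divided by `α m`. For `i = 0` the missing neighbour is accounted for by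
`w 0 = 0`. -/
def levelShift (n i : ℕ) : K :=
  w i / α (i - 1) + if i + 1 < n then w (i + 1) / α (i + 1) else 0

variable {α w}

theorem coeff_zero_levelContinuant (n : ℕ) :
    (levelContinuant α w n).coeff 0 = C (∏ m ∈ range n, α m) := by
  rw [levelContinuant, coeff_zero_continuant (by simp), map_prod]
  simp

theorem coeff_succ_levelContinuant (hw : w 0 = 0) (n j : ℕ) :
    (levelContinuant α w (n + 1)).coeff (j + 1) = C (α n) * (levelContinuant α w n).coeff (j + 1) +
      X * (levelContinuant α w n).coeff j - C (w n) * (levelContinuant α w (n - 1)).coeff j := by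
  rw [levelContinuant, continuant_succ (by simp [hw])]
  rw [levelContinuant, levelContinuant, Polynomial.coeff_sub, add_mul, Polynomial.coeff_add,
    Polynomial.coeff_C_mul, mul_assoc, mul_assoc, Polynomial.coeff_C_mul, Polynomial.coeff_C_mul,
    Polynomial.coeff_X_mul, Polynomial.coeff_X_mul]

theorem coeff_zero_levelContinuant_eq_zero {i n : ℕ} (hi : i < n) (hαi : α i = 0) :
    (levelContinuant α w n).coeff 0 = 0 := by
  rw [coeff_zero_levelContinuant, prod_eq_zero (mem_range.2 hi) hαi, Polynomial.C_0]

theorem coeff_one_levelContinuant_self (hw : w 0 = 0) {i : ℕ} (hαi : α i = 0)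
    (hprev : ∀ m, m + 1 = i → α m ≠ 0) :
    (levelContinuant α w (i + 1)).coeff 1 =
      C (∏ m ∈ range i, α m) * (X - C (w i / α (i - 1))) := by
  have hprod : w i * ∏ m ∈ range (i - 1), α m = (∏ m ∈ range i, α m) * (w i / α (i - 1)) := by
    obtain _ | i := i
    · simp [hw]
    · rw [prod_range_succ, Nat.add_sub_cancel]
      field_simp [hprev i rfl]
  rw [coeff_succ_levelContinuant hw, hαi, coeff_zero_levelContinuant,
    coeff_zero_levelContinuant, ← Polynomial.C_mul, hprod]
  simp only [map_zero, Polynomial.C_mul]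
  ring

theorem prod_range_succ_filter {M : Type*} [CommMonoid M] {f : ℕ → M} (p : ℕ → Prop)
    [DecidablePred p] (n : ℕ) :
    ∏ m ∈ range (n + 1) with p m, f m = (∏ m ∈ range n with p m, f m) * if p n then f n else 1 := by
  simp only [prod_filter, prod_range_succ]

theorem filter_range_ne_self (i : ℕ) : {m ∈ range i | m ≠ i} = range i :=
  filter_true_of_mem fun _ hm => (mem_range.1 hm).ne

theorem coeff_one_levelContinuant_of_simple (hw : w 0 = 0) {i n : ℕ} (hi : i < n) (hαi : α i = 0)
    (hprev : ∀ m, m + 1 = i → α m ≠ 0) (hnext : i + 1 < n → α (i + 1) ≠ 0) :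
    (levelContinuant α w n).coeff 1 =
      C (∏ m ∈ range n with m ≠ i, α m) * (X - C (levelShift α w n i)) := by
  obtain rfl | hlt := eq_or_lt_of_le (Nat.succ_le_of_lt hi)
  · rw [coeff_one_levelContinuant_self hw hαi hprev, prod_range_succ_filter, filter_range_ne_self]
    simp [levelShift]
  have hα := hnext hlt
  clear hnext hi
  induction n, hlt using Nat.le_induction with
  | base =>
    rw [coeff_succ_levelContinuant hw, coeff_one_levelContinuant_self hw hαi hprev,
      coeff_zero_levelContinuant_eq_zero (Nat.lt_succ_self i) hαi, Nat.add_sub_cancel,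
      coeff_zero_levelContinuant, prod_range_succ_filter, prod_range_succ_filter,
      filter_range_ne_self, levelShift, if_neg (not_not.2 rfl), if_pos (Nat.succ_ne_self i),
      if_pos (Nat.lt_succ_self _)]
    have hwα : C (w (i + 1)) = C (α (i + 1)) * C (w (i + 1) / α (i + 1)) := by
      rw [← Polynomial.C_mul, mul_div_cancel₀ _ hα]
    simp only [hwα, mul_one, Polynomial.C_mul, Polynomial.C_add]
    ring
  | succ n hn ih =>
    have hne : n ≠ i := by lia
    have hshift : levelShift α w (n + 1) i = levelShift α w n i := by
      rw [levelShift, levelShift, if_pos (by lia), if_pos (by lia)]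
    rw [coeff_succ_levelContinuant hw, ih, coeff_zero_levelContinuant_eq_zero (by lia) hαi,
      coeff_zero_levelContinuant_eq_zero (by lia) hαi, prod_range_succ_filter, if_pos hne,
      Polynomial.C_mul, hshift]
    ring

theorem coeff_one_levelContinuant_of_adjacent (hw : w 0 = 0) {i n : ℕ} (hi : i + 1 < n)
    (hαi : α i = 0) (hαi' : α (i + 1) = 0) :
    (levelContinuant α w n).coeff 1 =
      -C (w (i + 1) * ∏ m ∈ range n with m ≠ i ∧ m ≠ i + 1, α m) := by
  induction n, hi using Nat.le_induction with
  | base =>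
    have hbelow : {m ∈ range i | m ≠ i ∧ m ≠ i + 1} = range i :=
      filter_true_of_mem fun m hm => by grind
    rw [coeff_succ_levelContinuant hw, hαi', coeff_zero_levelContinuant_eq_zero (by lia) hαi,
      coeff_zero_levelContinuant, prod_range_succ_filter, prod_range_succ_filter, hbelow]
    simp
  | succ n hn ih =>
    rw [coeff_succ_levelContinuant hw, ih, coeff_zero_levelContinuant_eq_zero (by lia) hαi,
      coeff_zero_levelContinuant_eq_zero (by lia) hαi, prod_range_succ_filter,
      if_pos (by lia)]
    simp only [Polynomial.C_mul]
    ring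

theorem coeff_one_levelContinuant_eq_zero (hw : w 0 = 0) {i k n : ℕ} (hik : i + 2 ≤ k)
    (hkn : k < n) (hαi : α i = 0) (hαk : α k = 0) : (levelContinuant α w n).coeff 1 = 0 := by
  induction n, hkn using Nat.le_induction with
  | base =>
    rw [coeff_succ_levelContinuant hw, hαk, coeff_zero_levelContinuant_eq_zero (by lia) hαi,
      coeff_zero_levelContinuant_eq_zero (by lia) hαi]
    simp
  | succ n hn ih =>
    rw [coeff_succ_levelContinuant hw, ih, coeff_zero_levelContinuant_eq_zero (by lia) hαi,
      coeff_zero_levelContinuant_eq_zero (by lia) hαi]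
    simp

/-- The second-order interaction of two degenerate levels `i < k`, which is present only when they
have a common neighbour. -/
def levelCoupling (α w : ℕ → K) (i k : ℕ) : K :=
  if k = i + 2 then w (i + 1) * w k / α (i + 1) ^ 2 else 0

theorem coeff_two_levelContinuant_self (hw : w 0 = 0) {i k : ℕ} (hik : i + 2 ≤ k)
    (hαi : α i = 0) (hαk : α k = 0) (hprev : ∀ m, m + 1 = i → α m ≠ 0)
    (hnext : α (i + 1) ≠ 0) (hprev' : α (k - 1) ≠ 0) :
    (levelContinuant α w (k + 1)).coeff 2 = C (∏ m ∈ range k with m ≠ i, α m) *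
      ((X - C (levelShift α w k i)) * (X - C (w k / α (k - 1))) - C (levelCoupling α w i k)) := by
  obtain ⟨j, rfl⟩ : ∃ j, k = j + 1 := ⟨k - 1, by lia⟩
  rw [Nat.add_sub_cancel] at hprev' ⊢
  set q := w (j + 1) / α j with hq
  have hw_eq : w (j + 1) = α j * q := (mul_div_cancel₀ _ hprev').symm
  have hshift : q * levelShift α w j i =
      q * levelShift α w (j + 1) i - levelCoupling α w i (j + 1) := by
    unfold levelShift levelCoupling
    by_cases hj : j = i + 1
    · subst hj
      simp only [hq, lt_self_iff_false, ↓reduceIte, lt_add_iff_pos_right, zero_lt_one]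
      field_simp
      ring
    · simp [hj, show i + 1 < j by lia, show i < j by lia]
  have hshiftC := congrArg C hshift
  rw [Polynomial.C_mul, Polynomial.C_sub, Polynomial.C_mul] at hshiftC
  rw [coeff_succ_levelContinuant hw, hαk,
    coeff_one_levelContinuant_of_simple hw (by lia) hαi hprev fun _ => hnext,
    coeff_one_levelContinuant_of_simple hw (by lia) hαi hprev fun _ => hnext,
    prod_range_succ_filter, if_pos (by lia), Nat.add_sub_cancel, hw_eq]
  simp only [Polynomial.C_mul, Polynomial.C_0]
  linear_combination C (∏ m ∈ range j with m ≠ i, α m) * C (α j) * hshiftC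

theorem coeff_two_levelContinuant_of_double (hw : w 0 = 0) {i k n : ℕ} (hik : i + 2 ≤ k)
    (hkn : k < n) (hαi : α i = 0) (hαk : α k = 0) (hprev : ∀ m, m + 1 = i → α m ≠ 0)
    (hnext : α (i + 1) ≠ 0) (hprev' : α (k - 1) ≠ 0) (hnext' : k + 1 < n → α (k + 1) ≠ 0) :
    (levelContinuant α w n).coeff 2 = C (∏ m ∈ range n with m ≠ i ∧ m ≠ k, α m) *
      ((X - C (levelShift α w n i)) * (X - C (levelShift α w n k)) -
        C (levelCoupling α w i k)) := by
  have hshift : ∀ n, k ≤ n → levelShift α w n i = levelShift α w k i := fun n hn => by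
    rw [levelShift, levelShift, if_pos (by lia), if_pos (by lia)]
  have hbelow : {m ∈ range k | m ≠ i ∧ m ≠ k} = {m ∈ range k | m ≠ i} :=
    filter_congr fun m hm => and_iff_left (mem_range.1 hm).ne
  rw [hshift n hkn.le]
  obtain rfl | hlt := eq_or_lt_of_le (Nat.succ_le_of_lt hkn)
  · rw [coeff_two_levelContinuant_self hw hik hαi hαk hprev hnext hprev', prod_range_succ_filter,
      hbelow]
    simp [levelShift]
  have hα := hnext' hlt
  clear hnext' hkn
  induction n, hlt using Nat.le_induction with
  | base =>
    rw [coeff_succ_levelContinuant hw,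
      coeff_two_levelContinuant_self hw hik hαi hαk hprev hnext hprev',
      coeff_one_levelContinuant_eq_zero hw hik (Nat.lt_succ_self k) hαi hαk, Nat.add_sub_cancel,
      coeff_one_levelContinuant_of_simple hw (by lia) hαi hprev fun _ => hnext,
      prod_range_succ_filter, prod_range_succ_filter, hbelow, if_neg (by lia), if_pos (by lia),
      levelShift.eq_1 _ _ _ k, if_pos (Nat.lt_succ_self _)]
    have hwα : C (w (k + 1)) = C (α (k + 1)) * C (w (k + 1) / α (k + 1)) := by
      rw [← Polynomial.C_mul, mul_div_cancel₀ _ hα]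
    simp only [hwα, mul_one, Polynomial.C_mul, Polynomial.C_add]
    ring
  | succ n hn ih =>
    have hshift' : levelShift α w (n + 1) k = levelShift α w n k := by
      rw [levelShift, levelShift, if_pos (by lia), if_pos (by lia)]
    rw [coeff_succ_levelContinuant hw, ih,
      coeff_one_levelContinuant_eq_zero hw hik (by lia) hαi hαk,
      coeff_one_levelContinuant_eq_zero hw hik (by lia) hαi hαk, prod_range_succ_filter,
      if_pos (by lia), Polynomial.C_mul, hshift']
    ring

end Perturbation

section Slopes

variable {K : Type*} [Field K]

theorem nextCoeff_div_leadingCoeff_of_dvd {f q : K[X]} (hq : q.Monic) (hf : f ∣ q)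
    (hdeg : q.natDegree ≤ f.natDegree) : f.nextCoeff / f.leadingCoeff = q.nextCoeff := by
  have hf0 : f.leadingCoeff ≠ 0 := leadingCoeff_ne_zero.2 (ne_zero_of_dvd_ne_zero hq.ne_zero hf)
  have hnormalize : q = f * C f.leadingCoeff⁻¹ :=
    (eq_of_monic_of_dvd_of_natDegree_le (monic_mul_leadingCoeff_inv (by simpa using hf0)) hq
      (by rwa [mul_comm, Polynomial.C_mul_dvd (inv_ne_zero hf0)])
      (by rwa [natDegree_mul_C (inv_ne_zero hf0)]))
  rw [hnormalize, nextCoeff, nextCoeff, natDegree_mul_C (inv_ne_zero hf0)]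
  split_ifs
  · exact zero_div _
  · rw [Polynomial.coeff_mul_C, div_eq_mul_inv]

theorem isRoot_of_natDegree_eq_one {f : K[X]} (hf : f.natDegree = 1) :
    f.IsRoot (-(f.nextCoeff / f.leadingCoeff)) := by
  have h1 : f.coeff 1 ≠ 0 := by
    rw [← hf]
    exact leadingCoeff_ne_zero.2 fun h => by simp [h] at hf
  rw [nextCoeff_of_natDegree_pos (by lia), leadingCoeff, hf, tsub_self, IsRoot,
    eval_eq_sum_range, hf, Finset.sum_range_succ, Finset.sum_range_one]
  field_simp
  ring

theorem nextCoeff_div_leadingCoeff_of_dvd_sq_sub {f : K[X]} {e κ : K}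
    (hf : f ∣ (X - C e) ^ 2 - C κ) (hpos : 0 < f.natDegree) :
    f.nextCoeff / f.leadingCoeff = -(2 * e) ∨ (f.nextCoeff / f.leadingCoeff + e) ^ 2 = κ := by
  have hquad : (X - C e) ^ 2 - C κ = C 1 * X ^ 2 + C (-(2 * e)) * X + C (e ^ 2 - κ) := by
    simp only [map_neg, map_sub, map_mul, map_pow, map_one, map_ofNat]
    ring
  have hdeg : ((X - C e) ^ 2 - C κ).natDegree = 2 := by
    rw [hquad, natDegree_quadratic one_ne_zero]
  by_cases h2 : 2 ≤ f.natDegree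
  · left
    have hmonic : ((X - C e) ^ 2 - C κ).Monic := by
      rw [hquad, Monic, leadingCoeff_quadratic one_ne_zero]
    rw [nextCoeff_div_leadingCoeff_of_dvd hmonic hf (by rwa [hdeg]),
      nextCoeff_of_natDegree_pos (by lia), hdeg, hquad]
    simp [-map_pow, -map_sub]
  · right
    have hroot := (isRoot_of_natDegree_eq_one (f := f) (by lia)).dvd hf
    rw [IsRoot, Polynomial.eval_sub, Polynomial.eval_pow, Polynomial.eval_sub, Polynomial.eval_X,
      Polynomial.eval_C, Polynomial.eval_C] at hroot
    linear_combination hroot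

theorem sq_ne_sq_mul_sq_sub_one {n : ℕ} (hn : 2 ≤ n) (r : ℚ) :
    r ^ 2 ≠ (n : ℚ) ^ 2 * ((n : ℚ) ^ 2 - 1) := by
  intro h
  have hsquare : IsSquare ((n ^ 2 - 1 : ℕ) : ℚ) := by
    refine ⟨r / n, ?_⟩
    have hn0 : (n : ℚ) ≠ 0 := by positivity
    rw [Nat.cast_sub (Nat.one_le_pow _ _ (by lia))]
    push_cast
    field_simp
    linear_combination -h
  obtain ⟨m, hm⟩ := Rat.isSquare_natCast_iff.1 hsquare
  have hm_sq : n ^ 2 = m * m + 1 := by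
    have := Nat.one_le_pow 2 n (by lia)
    lia
  have hmn : m < n := by nlinarith
  nlinarith

theorem sum_ne_zero_of_rational_pos [CharZero K] {ι : Type*} {s : Finset ι} (hs : s.Nonempty)
    {f : ι → K} (i₀ : ι) (hrat : ∀ i ∈ s, i ≠ i₀ → ∃ r : ℚ, f i = r)
    (hpos : ∀ i ∈ s, ∀ r : ℚ, f i = r → 0 < r) : ∑ i ∈ s, f i ≠ 0 := by
  classical
  intro hsum
  have hrat' : ∀ i ∈ s, ∃ r : ℚ, f i = r := by
    intro i hi
    by_cases hii₀ : i = i₀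
    · have hmem : ∑ j ∈ s.erase i, f j ∈ (Rat.castHom K).range := sum_mem fun j hj => by
        obtain ⟨hji, hj⟩ := Finset.mem_erase.1 hj
        obtain ⟨r, hr⟩ := hrat j hj (hii₀ ▸ hji)
        exact ⟨r, hr.symm⟩
      obtain ⟨r, hr⟩ := hmem
      refine ⟨-r, ?_⟩
      rw [← Finset.add_sum_erase _ _ hi, ← hr] at hsum
      simpa using eq_neg_of_add_eq_zero_left hsum
    · exact hrat i hi hii₀
  choose! r hr using hrat'
  have hsumr : ∑ i ∈ s, r i = 0 := by
    rw [Finset.sum_congr rfl hr] at hsum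
    exact_mod_cast hsum
  exact (Finset.sum_pos (fun i hi => hpos i hi _ (hr i hi)) hs).ne' hsumr

end Slopes

section SpectralPolynomial

variable {K : Type*} [Field K]

/-- The number `m (l - m)`: minus the diagonal entry of `H_l` in row `m`, with rows indexed from
`0`, and also the product of the two off-diagonal entries coupling rows `m - 1` and `m`, up to the
factor `μ²`. For `m > l` the truncated subtraction gives `0`. -/
def level (l m : ℕ) : K :=
  (m * (l - m) : ℕ)

variable (K) in
/-- The polynomial `P_l`, with `u` the inner and `v` the outer variable. -/
noncomputable def spectralPolynomial (l : ℕ) : K[X][Y] :=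
  continuant (fun m => C (X - C (level l m))) (fun m => C (C (level l m)) * Y) l

theorem level_of_le {l m : ℕ} (h : m ≤ l) : (level l m : K) = m * (l - m) := by
  rw [level, Nat.cast_mul, Nat.cast_sub h]

theorem level_zero (l : ℕ) : (level l 0 : K) = 0 := by
  simp [level]

theorem level_sub_level {l i m : ℕ} (hi : i ≤ l) (hm : m ≤ l) :
    (level l i - level l m : K) = (m - i) * (m + i - l) := by
  rw [level_of_le hi, level_of_le hm]
  ring

theorem level_sub {l i : ℕ} (hi : i ≤ l) : (level l (l - i) : K) = level l i := by
  rw [level, level, Nat.sub_sub_self hi, mul_comm]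

theorem level_sub_level_ne_zero [CharZero K] {l i m : ℕ} (hi : i ≤ l) (hm : m ≤ l) (hmi : m ≠ i)
    (hmi' : m + i ≠ l) : (level l i - level l m : K) ≠ 0 := by
  rw [level_sub_level hi hm]
  refine mul_ne_zero (sub_ne_zero.2 ?_) (sub_ne_zero.2 ?_)
  · exact_mod_cast hmi
  · exact_mod_cast hmi'

theorem coeff_zero_spectralPolynomial (l : ℕ) :
    (spectralPolynomial K l).coeff 0 = ∏ m ∈ Finset.range l, (X - C (level l m)) := by
  rw [spectralPolynomial, coeff_zero_continuant (by simp)]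
  simp only [coeff_C_zero]

theorem natDegree_coeff_zero_spectralPolynomial (l : ℕ) :
    ((spectralPolynomial K l).coeff 0).natDegree = l := by
  rw [coeff_zero_spectralPolynomial, natDegree_finsetProd_X_sub_C_eq_card, Finset.card_range]

theorem coeff_zero_spectralPolynomial_ne_zero (l : ℕ) : (spectralPolynomial K l).coeff 0 ≠ 0 := by
  rw [coeff_zero_spectralPolynomial]
  exact (monic_prod_X_sub_C _ _).ne_zero

theorem coeff_zero_dvd_of_mul_eq_spectralPolynomial {l : ℕ} {Q R : K[X][Y]}
    (hQR : Q * R = spectralPolynomial K l) : R.coeff 0 ∣ (spectralPolynomial K l).coeff 0 := by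
  rw [← hQR, mul_coeff_zero]
  exact dvd_mul_left _ _

theorem splits_coeff_zero_of_mul_eq_spectralPolynomial {l : ℕ} {Q R : K[X][Y]}
    (hQR : Q * R = spectralPolynomial K l) : (R.coeff 0).Splits := by
  refine Splits.of_dvd ?_ (coeff_zero_spectralPolynomial_ne_zero l)
    (coeff_zero_dvd_of_mul_eq_spectralPolynomial hQR)
  rw [coeff_zero_spectralPolynomial]
  exact Splits.prod fun _ _ => Splits.X_sub_C _

theorem weightedDegree_spectralPolynomial_le (l : ℕ) :
    weightedDegree (spectralPolynomial K l) ≤ l := by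
  rw [weightedDegree, spectralPolynomial, map_continuant]
  refine natDegree_continuant_le (fun m => ?_) (fun m => ?_) l
  · simp [weightHom]
  · have hw : weightHom (C (C (level l m : K)) * Y) = C (C (level l m) * X) * Y ^ 2 := by
      simp [weightHom, mul_assoc]
    exact (congrArg natDegree hw).trans_le (natDegree_C_mul_X_pow_le _ _)

theorem weightedDegree_le_of_mul_eq_spectralPolynomial {l : ℕ} {Q R : K[X][Y]}
    (hQR : Q * R = spectralPolynomial K l) : weightedDegree R ≤ (R.coeff 0).natDegree := by
  refine weightedDegree_le_of_mul (Q := Q) ?_ ?_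
  · rw [hQR]
    exact coeff_zero_spectralPolynomial_ne_zero l
  · rw [hQR, natDegree_coeff_zero_spectralPolynomial]
    exact weightedDegree_spectralPolynomial_le l

theorem blowUp_spectralPolynomial (c : K) (l : ℕ) :
    blowUp c (spectralPolynomial K l) = levelContinuant (fun m => c - level l m) (level l) l := by
  rw [spectralPolynomial, map_continuant, levelContinuant]
  congr 1 <;> ext1 m
  · simp [blowUp, add_sub_right_comm]
  · simp [blowUp]

/-- The common second-order shift of the levels `i` and `l - i` of the spectral polynomial: the
contributions of the two neighbours of either level, added up. -/
def spectralShift (l i : ℕ) : K :=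
  -(1 + 2 * level l i / ((l - 2 * i) ^ 2 - 1))

theorem spectralShift_neg {l i : ℕ} (hil : 2 * i + 2 ≤ l) : (spectralShift l i : ℚ) < 0 := by
  have hgap : (2 : ℚ) ≤ l - 2 * i := by
    rw [le_sub_iff_add_le']
    exact_mod_cast hil
  have hlevel : (0 : ℚ) ≤ level l i := Nat.cast_nonneg _
  have hden : (0 : ℚ) < (l - 2 * i) ^ 2 - 1 := by nlinarith
  rw [spectralShift, neg_lt_zero]
  positivity

theorem spectralShift_sub {l i : ℕ} (hi : i ≤ l) :
    (spectralShift l (l - i) : K) = spectralShift l i := by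
  rw [spectralShift, spectralShift, level_sub hi, Nat.cast_sub hi]
  ring

theorem levelShift_level {l i : ℕ} (hil : i < l) (hgap : ((l - 2 * i) ^ 2 - 1 : K) ≠ 0) :
    levelShift (fun m => (level l i - level l m : K)) (level l) l i = spectralShift l i := by
  have hfactor : ((l - 2 * i) ^ 2 - 1 : K) = (l - 2 * i + 1) * (l - 2 * i - 1) := by ring
  rw [hfactor] at hgap
  have hadd := left_ne_zero_of_mul hgap
  have hsub := right_ne_zero_of_mul hgap
  have hnext : (level l i - level l (i + 1) : K) = -(l - 2 * i - 1) := by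
    rw [level_sub_level hil.le hil]
    push_cast
    ring
  have hprev : level l i / (level l i - level l (i - 1)) = (level l i / (l - 2 * i + 1) : K) := by
    obtain _ | i := i
    · simp [level_zero]
    · rw [Nat.add_sub_cancel, level_sub_level hil.le (by lia)]
      push_cast
      ring
  have hlast : (if i + 1 < l then level l (i + 1) / (level l i - level l (i + 1)) else 0 : K) =
      level l (i + 1) / (level l i - level l (i + 1)) := by
    rw [ite_eq_left_iff, not_lt]
    intro h
    simp [level, Nat.sub_eq_zero_of_le h]
  have hlevel : (level l (i + 1) : K) = level l i + (l - 2 * i - 1) := by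
    linear_combination -hnext
  rw [levelShift, hlast, hprev, hnext, spectralShift, hfactor, hlevel]
  field_simp
  ring

theorem exists_eq_level_of_isRoot {l : ℕ} {c : K}
    (hc : ((spectralPolynomial K l).coeff 0).IsRoot c) (hne : c ≠ level l (l / 2)) :
    ∃ i, 2 * i + 2 ≤ l ∧ c = level l i := by
  rw [coeff_zero_spectralPolynomial, IsRoot, Polynomial.eval_prod, Finset.prod_eq_zero_iff] at hc
  obtain ⟨m, hm, hmc⟩ := hc
  have hml : m < l := Finset.mem_range.1 hm
  rw [Polynomial.eval_sub, Polynomial.eval_X, Polynomial.eval_C, sub_eq_zero] at hmc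
  have hlower : ∀ i ≤ l / 2, c = level l i → ∃ i, 2 * i + 2 ≤ l ∧ c = level l i := fun i hi hci =>
    ⟨i, by have : i ≠ l / 2 := fun h => hne (h ▸ hci); lia, hci⟩
  obtain hle | hgt := le_or_gt m (l / 2)
  · exact hlower m hle hmc
  · exact hlower (l - m) (by lia) (by rw [level_sub hml.le, hmc])

variable [CharZero K]

theorem cast_spectralShift (l i : ℕ) : ((spectralShift l i : ℚ) : K) = spectralShift l i := by
  simp [spectralShift, level]

theorem sub_two_mul_sq_sub_one_ne_zero {l i : ℕ} (hil : 2 * i + 2 ≤ l) :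
    ((l - 2 * i) ^ 2 - 1 : K) ≠ 0 := by
  obtain ⟨x, rfl⟩ := Nat.exists_eq_add_of_le hil
  have hfactor : (((2 * i + 2 + x : ℕ) - 2 * i) ^ 2 - 1 : K) = ((x + 3) * (x + 1) : ℕ) := by
    push_cast
    ring
  rw [hfactor, Nat.cast_ne_zero]
  positivity

theorem levelCoupling_level {l i : ℕ} :
    levelCoupling (fun m => (level l i - level l m : K)) (level l) i (l - i) =
      if l = 2 * i + 2 then ((i + 1 : ℕ) : K) ^ 2 * (((i + 1 : ℕ) : K) ^ 2 - 1) else 0 := by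
  rw [levelCoupling]
  refine ite_congr (propext (by lia)) (fun h => ?_) fun _ => rfl
  subst h
  rw [level_sub_level (by lia) (by lia), level_sub (by lia), level_of_le (by lia),
    level_of_le (by lia)]
  push_cast
  field_simp
  ring

theorem levelShift_level_sub {l i : ℕ} (hi : 0 < i) (hil : 2 * i + 2 ≤ l) :
    levelShift (fun m => (level l i - level l m : K)) (level l) l (l - i) = spectralShift l i := by
  rw [← spectralShift_sub (by lia), ← levelShift_level (by lia), level_sub (by lia)]
  have hgap := sub_two_mul_sq_sub_one_ne_zero (K := K) hil
  rw [Nat.cast_sub (by lia)]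
  convert hgap using 1
  ring

theorem isTransversal_spectralPolynomial_zero {l : ℕ} (hl : 2 ≤ l) :
    IsTransversal (level l 0 : K) (spectralPolynomial K l) ∧
      tangentCone (level l 0 : K) (spectralPolynomial K l) ∣ X - C (spectralShift l 0) := by
  have hne : ∀ m < l, m ≠ 0 → (level l 0 - level l m : K) ≠ 0 := fun m hm hm0 =>
    level_sub_level_ne_zero l.zero_le hm.le hm0 (by lia)
  have hunit : ∏ m ∈ Finset.range l with m ≠ 0, (level l 0 - level l m : K) ≠ 0 :=
    Finset.prod_ne_zero_iff.2 fun m hm => by grind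
  have hcoeff := coeff_one_levelContinuant_of_simple (K := K) (w := level l)
    (α := fun m => level l 0 - level l m) (level_zero l) (i := 0) (n := l) (by lia) (sub_self _)
    (by simp) fun h => hne _ h one_ne_zero
  rw [levelShift_level (by lia) (sub_two_mul_sq_sub_one_ne_zero hl),
    ← blowUp_spectralPolynomial] at hcoeff
  have hlow : ∀ m < 1, (blowUp (level l 0) (spectralPolynomial K l)).coeff m = 0 := by
    intro m hm
    rw [blowUp_spectralPolynomial, Nat.lt_one_iff.1 hm]
    exact coeff_zero_levelContinuant_eq_zero (by lia) (sub_self _)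
  obtain ⟨htrans, hcone⟩ := isTransversal_of_coeff hlow (by
    rw [hcoeff, Polynomial.coeff_C_mul]
    simpa using hunit)
  exact ⟨htrans, by rw [hcone, hcoeff, Polynomial.C_mul_dvd hunit]⟩

theorem coeff_two_blowUp_spectralPolynomial {l i : ℕ} (hi : 0 < i) (hil : 2 * i + 2 ≤ l) :
    ∃ b : K, b ≠ 0 ∧ (blowUp (level l i) (spectralPolynomial K l)).coeff 2 =
      C b * ((X - C (spectralShift l i)) ^ 2 -
        C (if l = 2 * i + 2 then ((i + 1 : ℕ) : K) ^ 2 * (((i + 1 : ℕ) : K) ^ 2 - 1) else 0)) := by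
  have hne : ∀ m ≤ l, m ≠ i → m + i ≠ l → (level l i - level l m : K) ≠ 0 := fun m hm =>
    level_sub_level_ne_zero (by lia) hm
  refine ⟨∏ m ∈ Finset.range l with m ≠ i ∧ m ≠ l - i, (level l i - level l m),
    Finset.prod_ne_zero_iff.2 fun m hm => by grind, ?_⟩
  rw [blowUp_spectralPolynomial, coeff_two_levelContinuant_of_double (level_zero l) (k := l - i)
    (by lia) (by lia) (sub_self _) (by rw [level_sub (by lia), sub_self])
    (fun m hm => hne m (by lia) (by lia) (by lia)) (hne _ (by lia) (by lia) (by lia))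
    (hne _ (by lia) (by lia) (by lia)) (fun _ => hne _ (by lia) (by lia) (by lia)),
    levelShift_level (by lia) (sub_two_mul_sq_sub_one_ne_zero hil), levelShift_level_sub hi hil,
    levelCoupling_level, ← sq]

theorem isTransversal_spectralPolynomial {l i : ℕ} (hi : 0 < i) (hil : 2 * i + 2 ≤ l) :
    IsTransversal (level l i : K) (spectralPolynomial K l) ∧
      tangentCone (level l i : K) (spectralPolynomial K l) ∣ (X - C (spectralShift l i)) ^ 2 -
        C (if l = 2 * i + 2 then ((i + 1 : ℕ) : K) ^ 2 * (((i + 1 : ℕ) : K) ^ 2 - 1) else 0) := by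
  obtain ⟨b, hb, hcoeff⟩ := coeff_two_blowUp_spectralPolynomial (K := K) hi hil
  have hlow : ∀ m < 2, (blowUp (level l i) (spectralPolynomial K l)).coeff m = 0 := by
    intro m hm
    rw [blowUp_spectralPolynomial]
    interval_cases m
    · exact coeff_zero_levelContinuant_eq_zero (by lia) (sub_self _)
    · exact coeff_one_levelContinuant_eq_zero (level_zero l) (k := l - i) (by lia) (by lia)
        (sub_self _) (by rw [level_sub (by lia), sub_self])
  have hlead : ((X - C (spectralShift l i : K)) ^ 2).coeff 2 = 1 := by
    simpa [Monic, leadingCoeff] using (monic_X_sub_C (spectralShift l i : K)).pow 2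
  obtain ⟨htrans, hcone⟩ := isTransversal_of_coeff hlow (by
    rw [hcoeff, Polynomial.coeff_C_mul, Polynomial.coeff_sub, hlead, Polynomial.coeff_C_succ]
    simpa using hb)
  exact ⟨htrans, by rw [hcone, hcoeff, Polynomial.C_mul_dvd hb]⟩

theorem coeff_one_blowUp_spectralPolynomial_ne_zero {l : ℕ} (hl : 1 ≤ l) :
    (blowUp (level l (l / 2) : K) (spectralPolynomial K l)).coeff 1 ≠ 0 := by
  have hne : ∀ m ≤ l, m ≠ l / 2 → m + l / 2 ≠ l → (level l (l / 2) - level l m : K) ≠ 0 :=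
    fun m hm => level_sub_level_ne_zero (by lia) hm
  rw [blowUp_spectralPolynomial]
  by_cases hadj : l / 2 + 1 < l ∧ l / 2 + 1 + l / 2 = l
  · obtain ⟨hlt, hodd⟩ := hadj
    have hpartner : l / 2 + 1 = l - l / 2 := by lia
    rw [coeff_one_levelContinuant_of_adjacent (level_zero l) hlt (sub_self _)
      (by rw [hpartner, level_sub (by lia), sub_self]), neg_ne_zero, Polynomial.C_ne_zero]
    refine mul_ne_zero ?_ (Finset.prod_ne_zero_iff.2 fun m hm => by grind)
    rw [level, Nat.cast_ne_zero]
    exact (Nat.mul_pos (by lia) (by lia)).ne'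
  · rw [coeff_one_levelContinuant_of_simple (level_zero l) (i := l / 2) (by lia) (sub_self _)
      (fun m hm => hne m (by lia) (by lia) (by lia)) (fun h => hne _ h.le (by lia) (by lia))]
    refine mul_ne_zero (Polynomial.C_ne_zero.2 ?_) (X_sub_C_ne_zero _)
    exact Finset.prod_ne_zero_iff.2 fun m hm => by grind

theorem isTransversal_of_mul_eq_spectralPolynomial {l i : ℕ} {Q R : K[X][Y]} (hil : 2 * i + 2 ≤ l)
    (hQR : Q * R = spectralPolynomial K l) : IsTransversal (level l i) R := by
  obtain rfl | hi := i.eq_zero_or_pos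
  · exact (hQR ▸ (isTransversal_spectralPolynomial_zero hil).1 :).of_mul_right
  · exact (hQR ▸ (isTransversal_spectralPolynomial hi hil).1 :).of_mul_right

theorem residue_of_mul_eq_spectralPolynomial {l i : ℕ} {Q R : K[X][Y]} (hil : 2 * i + 2 ≤ l)
    (hQR : Q * R = spectralPolynomial K l) (hroot : (R.coeff 0).IsRoot (level l i)) :
    residue (level l i) R = -spectralShift l i ∨ residue (level l i) R = -(2 * spectralShift l i) ∨
      1 ≤ i ∧ l = 2 * i + 2 ∧ (residue (level l i) R + spectralShift l i) ^ 2 =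
        ((i + 1 : ℕ) : K) ^ 2 * (((i + 1 : ℕ) : K) ^ 2 - 1) := by
  have hcone : tangentCone (level l i) R ∣ tangentCone (level l i) (Q * R) := by
    rw [tangentCone_mul]
    exact dvd_mul_left _ _
  have hpos := (isTransversal_of_mul_eq_spectralPolynomial hil hQR).natDegree_tangentCone_pos hroot
  obtain rfl | hi := i.eq_zero_or_pos
  · have hdvd := (isTransversal_spectralPolynomial_zero (K := K) hil).2
    rw [← hQR] at hdvd
    left
    rw [residue, nextCoeff_div_leadingCoeff_of_dvd (monic_X_sub_C _) (hcone.trans hdvd)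
      (by rwa [natDegree_X_sub_C]), nextCoeff_X_sub_C]
  · have hdvd := (isTransversal_spectralPolynomial (K := K) hi hil).2
    rw [← hQR] at hdvd
    obtain hdouble | hsq := nextCoeff_div_leadingCoeff_of_dvd_sq_sub (hcone.trans hdvd) hpos
    · exact .inr (.inl hdouble)
    · split_ifs at hsq with hl
      · exact .inr (.inr ⟨hi, hl, hsq⟩)
      · exact .inl (eq_neg_of_add_eq_zero_left ((pow_eq_zero_iff two_ne_zero).1 hsq))

theorem residue_pos_of_mul_eq_spectralPolynomial {l i : ℕ} {Q R : K[X][Y]} (hil : 2 * i + 2 ≤ l)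
    (hQR : Q * R = spectralPolynomial K l) (hroot : (R.coeff 0).IsRoot (level l i)) {r : ℚ}
    (hr : residue (level l i) R = r) : 0 < r := by
  have hneg := spectralShift_neg hil
  have h := residue_of_mul_eq_spectralPolynomial hil hQR hroot
  rw [hr, ← cast_spectralShift] at h
  norm_cast at h
  obtain rfl | rfl | ⟨hi, -, hsq⟩ := h
  · linarith
  · linarith
  · exact absurd (by exact_mod_cast hsq)
      (sq_ne_sq_mul_sq_sub_one (n := i + 1) (by lia) (r + spectralShift l i))

theorem exists_rat_residue_of_mul_eq_spectralPolynomial {l i : ℕ} {Q R : K[X][Y]}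
    (hil : 2 * i + 2 ≤ l) (hne : l ≠ 2 * i + 2) (hQR : Q * R = spectralPolynomial K l)
    (hroot : (R.coeff 0).IsRoot (level l i)) : ∃ r : ℚ, residue (level l i) R = r := by
  obtain h | h | h := residue_of_mul_eq_spectralPolynomial hil hQR hroot
  · exact ⟨-spectralShift l i, by rw [h, Rat.cast_neg, cast_spectralShift]⟩
  · exact ⟨-(2 * spectralShift l i), by rw [h]; push_cast [cast_spectralShift]; rfl⟩
  · exact absurd h.2.1 hne

theorem isUnit_of_mul_eq_spectralPolynomial {l : ℕ} {Q R : K[X][Y]}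
    (hQR : Q * R = spectralPolynomial K l) (hR : ¬(R.coeff 0).IsRoot (level l (l / 2))) :
    IsUnit R := by
  classical
  have hsplits := splits_coeff_zero_of_mul_eq_spectralPolynomial hQR
  have hweight := weightedDegree_le_of_mul_eq_spectralPolynomial hQR
  have hlevel : ∀ c, (R.coeff 0).IsRoot c → ∃ i, 2 * i + 2 ≤ l ∧ c = level l i := fun c hc =>
    exists_eq_level_of_isRoot (hc.dvd (coeff_zero_dvd_of_mul_eq_spectralPolynomial hQR))
      fun h => hR (h ▸ hc)
  have hsum : ∑ c ∈ (R.coeff 0).roots.toFinset, residue c R = 0 := by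
    refine sum_residues_eq_zero hsplits (degree_coeff_one_lt hweight) fun c hc => ?_
    obtain ⟨i, hil, rfl⟩ := hlevel c hc
    exact (isTransversal_of_mul_eq_spectralPolynomial hil hQR).pow_dvd_sub_residue hc
  have hpos : ∀ c ∈ (R.coeff 0).roots.toFinset, ∀ r : ℚ, residue c R = r → 0 < r := by
    intro c hc r hr
    have hroot := isRoot_of_mem_roots (Multiset.mem_toFinset.1 hc)
    obtain ⟨i, hil, rfl⟩ := hlevel c hroot
    exact residue_pos_of_mul_eq_spectralPolynomial hil hQR hroot hr
  have hrat : ∀ c ∈ (R.coeff 0).roots.toFinset, c ≠ level l (l / 2 - 1) →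
      ∃ r : ℚ, residue c R = r := by
    intro c hc hne
    have hroot := isRoot_of_mem_roots (Multiset.mem_toFinset.1 hc)
    obtain ⟨i, hil, rfl⟩ := hlevel c hroot
    refine exists_rat_residue_of_mul_eq_spectralPolynomial hil (fun hl => hne ?_) hQR hroot
    congr 1
    lia
  have hroots : (R.coeff 0).roots.toFinset = ∅ := by
    by_contra! hs
    exact sum_ne_zero_of_rational_pos hs _ hrat hpos hsum
  have hconst : (R.coeff 0).natDegree = 0 := by
    rw [hsplits.natDegree_eq_card_roots, Multiset.toFinset_eq_empty.1 hroots, Multiset.card_zero]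
  have hR0 : R ≠ 0 := fun h => hR (by simp [h])
  exact isUnit_of_weightedDegree_eq_zero hR0 (Nat.le_zero.1 (hconst ▸ hweight))

theorem irreducible_spectralPolynomial {l : ℕ} (hl : 1 ≤ l) :
    Irreducible (spectralPolynomial K l) := by
  refine ⟨fun hunit => ?_, fun Q R hQR => ?_⟩
  · have hdeg := natDegree_eq_zero_of_isUnit (hunit.map Polynomial.constantCoeff)
    rw [constantCoeff_apply, natDegree_coeff_zero_spectralPolynomial] at hdeg
    lia
  · by_cases hR : (R.coeff 0).IsRoot (level l (l / 2))
    · refine .inl (isUnit_of_mul_eq_spectralPolynomial ((mul_comm _ _).trans hQR.symm) fun hQ => ?_)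
      exact coeff_one_blowUp_spectralPolynomial_ne_zero hl
        (hQR ▸ coeff_one_blowUp_mul_eq_zero hQ hR)
    · exact .inr (isUnit_of_mul_eq_spectralPolynomial hQR.symm hR)

end SpectralPolynomial

section Transfer

open Polynomial.Bivariate

variable {K : Type*} [Field K]

theorem aeval_equivMvPolynomial (F : K[X][Y]) :
    MvPolynomial.aeval ![MvPolynomial.X 0, MvPolynomial.X 1 ^ 2] (equivMvPolynomial K F) =
      equivMvPolynomial K (expand K[X] 2 F) := by
  have h : (MvPolynomial.aeval ![MvPolynomial.X 0, MvPolynomial.X 1 ^ 2]).toRingHom.comp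
        (equivMvPolynomial K).toRingHom =
      (equivMvPolynomial K).toRingHom.comp (expand K[X] 2).toRingHom := by
    ext <;> simp
  exact DFunLike.congr_fun h F

theorem det_tridiagonal_level (l : ℕ) :
    (tridiagonal (fun m => MvPolynomial.X 0 - MvPolynomial.C (level l m : K))
      (fun m => MvPolynomial.X 1 * MvPolynomial.C ((m + 1 : ℕ) : K))
      (fun m => MvPolynomial.X 1 * MvPolynomial.C ((l - m : ℕ) : K)) l).det =
      equivMvPolynomial K (expand K[X] 2 (spectralPolynomial K l)) := by
  rw [det_tridiagonal (w := fun m => MvPolynomial.C (level l m) * MvPolynomial.X 1 ^ 2)]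
  · refine .trans ?_ (map_continuant
      ((equivMvPolynomial K).toRingHom.comp (expand K[X] 2).toRingHom) _ _ l).symm
    congr 1 <;> ext1 m <;> simp
  · intro m
    simp only [level, Nat.cast_mul, MvPolynomial.C_mul]
    ring

end Transfer

end DoubleConfluentHeun

theorem stmt7_general {K : Type*} [Field K] [CharZero K] (l : ℕ) (hl : 1 ≤ l)
    (P : MvPolynomial (Fin 2) K)
    (hP : (Matrix.of fun i j : Fin l =>
        (if (i : ℕ) = (j : ℕ) then X 0 - C (((i : ℕ) * (l - (i : ℕ)) : ℕ) : K)
        else if (i : ℕ) + 1 = (j : ℕ) then X 1 * C ((((i : ℕ) + 1 : ℕ)) : K)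
        else if (j : ℕ) + 1 = (i : ℕ) then X 1 * C (((l - (i : ℕ) : ℕ)) : K)
        else 0 : MvPolynomial (Fin 2) K)).det
      = aeval ![X 0, (X 1) ^ 2] P) :
    Irreducible P := by
  obtain ⟨F, rfl⟩ := (Polynomial.Bivariate.equivMvPolynomial K).surjective P
  have hF : DoubleConfluentHeun.spectralPolynomial K l = F := by
    refine Polynomial.expand_injective two_pos
      ((Polynomial.Bivariate.equivMvPolynomial K).injective ?_)
    rw [← DoubleConfluentHeun.det_tridiagonal_level,
      ← DoubleConfluentHeun.aeval_equivMvPolynomial, ← hP]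
    rfl
  rw [MulEquiv.irreducible_iff, ← hF]
  exact DoubleConfluentHeun.irreducible_spectralPolynomial hl

/-- the polynomial P_l(u,v) defined by det(H_l + λ·Id) = P_l(λ, μ²)
is irreducible in ℂ[u,v].  Variables of the determinant: X 0 = λ, X 1 = μ;
variables of P: X 0 = u, X 1 = v. -/
theorem stmt7 (l : ℕ) (hl : 1 ≤ l) (P : MvPolynomial (Fin 2) ℂ)
    (hP : (Matrix.of fun i j : Fin l =>
        (if (i : ℕ) = (j : ℕ) then X 0 - C (((i : ℕ) * (l - (i : ℕ)) : ℕ) : ℂ)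
        else if (i : ℕ) + 1 = (j : ℕ) then X 1 * C ((((i : ℕ) + 1 : ℕ)) : ℂ)
        else if (j : ℕ) + 1 = (i : ℕ) then X 1 * C (((l - (i : ℕ) : ℕ)) : ℂ)
        else 0 : MvPolynomial (Fin 2) ℂ)).det
      = aeval ![X 0, (X 1) ^ 2] P) :
    Irreducible P :=
  stmt7_general l hl P hP
end

section
/- For every l ≥ 2, the affine plane curve Γ_l = {(λ,μ) ∈ ℂ² : P_l(λ,μ²) = 0} is irreducible, i.e., P_l(λ,μ²) is an irreducible polynomial in ℂ[λ,μ], where P_l is the degree-l polynomial with det(H_l + λ·Id) = P_l(λ,μ²). -/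
open MvPolynomial Matrix

open scoped Polynomial
open IsLocalRing

/-!
Over a valuation ring that dominates `K[μ]` at `μ = 0` and in which monic polynomials split, let `κ`
be an eigenvalue of `-H_l`. An eigenvector with a unit entry shows that `κ` reduces to some
`a(l-a)`. If `|l-2a| ≥ 2`, its rows give `κ = a(l-a) + μ²ρ`, where `ρ` reduces to an element of
`q + ℚ√(l²-4)` with `q < 0`; the square root comes from the case `|l-2a| = 2`, in which the entries
at `a` and `l-a` interact at second order.

Since `det(λ + H_l)` has total degree `l`, the sum of the roots of a factor is affine in `μ`. As
`l²-4` is `0` or not a square, the shifts of order `μ²` cannot cancel in that sum, so a factor none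
of whose roots reduces to the middle value `⌊l/2⌋⌈l/2⌉` is constant.

Let `f` be the prime factor through `(0,0)`. It is even in `μ`, because `0` is a simple eigenvalue
at `μ = 0`. If its cofactor is not constant, both vanish at the middle value, which is then a double
eigenvalue at `μ = 0`; so `l` is odd and `f` vanishes simply there. Being even, `f` has a root that
agrees with the middle value modulo `μ²`, whereas for odd `l` the rows of the eigenvector show that
such a root moves at first order in `μ`.
-/

universe u

/-! ### Valuation rings and local rings -/

theorem exists_valuationRing_splits_of_monic {R : Type u} [CommRing R] [IsDomain R] {x : R}
    (hx : ¬IsUnit x) :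
    ∃ (A : Type u) (_ : CommRing A) (_ : IsDomain A) (_ : ValuationRing A) (φ : R →+* A),
      Function.Injective φ ∧ φ x ∈ maximalIdeal A ∧ ∀ p : A[X], p.Monic → p.Splits := by
  let L := AlgebraicClosure (FractionRing R)
  have hinj : Function.Injective (algebraMap R L) := by
    rw [IsScalarTower.algebraMap_eq R (FractionRing R) L]
    exact (algebraMap (FractionRing R) L).injective.comp (IsFractionRing.injective R _)
  let e : R ≃+* (algebraMap R L).range :=
    RingEquiv.ofBijective (algebraMap R L).rangeRestrict
      ⟨(algebraMap R L).injective_codRestrict.mpr hinj, (algebraMap R L).rangeRestrict_surjective⟩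
  obtain ⟨A, hRA, hIA⟩ := Ideal.image_subset_nonunits_valuationSubring
    (Ideal.span {e x}) (mt Ideal.span_singleton_eq_top.mp ((isUnit_map_iff e x).not.mpr hx))
  refine ⟨A, inferInstance, inferInstance, inferInstance,
    (algebraMap R L).codRestrict A fun y => hRA ⟨y, rfl⟩,
    (algebraMap R L).injective_codRestrict.mpr hinj, ?_, fun p hp => ?_⟩
  · rw [← ValuationSubring.coe_mem_nonunits_iff]
    exact hIA ⟨e x, Ideal.mem_span_singleton_self _, rfl⟩
  · refine (IsAlgClosed.splits (p.map A.subtype)).of_splits_map_of_injective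
      A.subtype_injective fun a ha => ?_
    have ha : p.eval₂ A.subtype a = 0 := by
      rw [← Polynomial.eval_map]; exact Polynomial.isRoot_of_mem_roots ha
    obtain ⟨b, rfl⟩ := IsIntegrallyClosed.isIntegral_iff.mp (⟨p, hp, ha⟩ : IsIntegral A a)
    exact ⟨b, rfl⟩

theorem exists_sq_eq_of_splits_of_monic {A : Type*} [CommRing A] [Nontrivial A]
    (h : ∀ p : A[X], p.Monic → p.Splits) (c : A) : ∃ x, x ^ 2 = c := by
  obtain ⟨x, hx⟩ := (h _ (Polynomial.monic_X_pow_sub_C c two_ne_zero)).exists_eval_eq_zero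
    (by rw [Polynomial.degree_X_pow_sub_C two_pos]; exact two_ne_zero)
  exact ⟨x, by simpa [sub_eq_zero] using hx⟩

theorem exists_mulVec_eq_zero_and_isUnit {A n : Type*} [CommRing A] [IsDomain A] [ValuationRing A]
    [Fintype n] [DecidableEq n] {M : Matrix n n A} (hM : M.det = 0) :
    ∃ v, M *ᵥ v = 0 ∧ ∃ a, IsUnit (v a) := by
  obtain ⟨u, hu, hMu⟩ := Matrix.exists_mulVec_eq_zero_iff.mpr hM
  obtain ⟨g, hg⟩ := (IsBezout.isPrincipal_of_FG _
    (Submodule.fg_span (Set.finite_range u))).principal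
  have hdvd (i : n) : g ∣ u i := by
    rw [← Ideal.mem_span_singleton, ← Ideal.submodule_span_eq, ← hg]
    exact Submodule.subset_span ⟨i, rfl⟩
  choose v hv using hdvd
  obtain rfl : u = g • v := funext hv
  have hg0 : g ≠ 0 := left_ne_zero_of_smul hu
  refine ⟨v, by simpa [Matrix.mulVec_smul, hg0] using hMu, ?_⟩
  have hmem : g ∈ Ideal.span (Set.range (g • v)) := by
    rw [← Ideal.submodule_span_eq, hg]
    exact Submodule.mem_span_singleton_self g
  obtain ⟨c, hc⟩ := Ideal.mem_span_range_iff_exists_fun.mp hmem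
  have hone : ∑ i, c i * v i = 1 := by
    apply mul_left_cancel₀ hg0
    simpa [Finset.mul_sum, mul_left_comm] using hc
  obtain ⟨a, -, ha⟩ := exists_of_isUnit_sum (hone ▸ isUnit_one)
  exact ⟨a, isUnit_of_mul_isUnit_right ha⟩

section LocalRing

variable {A : Type*} [CommRing A] [IsLocalRing A]

theorem exists_mem_roots_residue_eq [IsDomain A] {p : A[X]} (hp : p.Monic) (hs : p.Splits) {c : A}
    (hc : residue A (p.eval c) = 0) : ∃ κ ∈ p.roots, residue A κ = residue A c := by
  rw [hs.eval_eq_prod_roots_of_monic hp, map_multiset_prod, Multiset.prod_eq_zero_iff] at hc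
  simp only [Multiset.map_map, Function.comp_apply, Multiset.mem_map] at hc
  obtain ⟨κ, hκ, h⟩ := hc
  exact ⟨κ, hκ, (sub_eq_zero.mp (by rwa [← map_sub])).symm⟩

theorem residue_eval_map {R : Type*} [CommRing R] {φ : R[X] →+* A}
    (hφ : φ Polynomial.X ∈ maximalIdeal A) {κ : A} {d : R}
    (hκ : residue A κ = residue A (φ (Polynomial.C d))) (p : R[X][X]) :
    residue A ((p.map φ).eval κ) = residue A (φ (Polynomial.C (p.evalEval 0 d))) := by
  have h : (residue A).comp ((Polynomial.evalRingHom κ).comp (Polynomial.mapRingHom φ)) =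
      ((residue A).comp (φ.comp Polynomial.C)).comp (Polynomial.evalEvalRingHom 0 d) := by
    ext
    · simp
    · simpa using (residue_eq_zero_iff _).mpr hφ
    · simpa using hκ
  simpa using RingHom.congr_fun h p

end LocalRing

/-! ### Factors of monic polynomials -/

section Factors

variable {R : Type*} [CommRing R]

theorem exists_monic_associated_of_dvd [IsDomain R] {p q : R[X]} (hq : q.Monic) (hpq : p ∣ q) :
    ∃ f : R[X], f.Monic ∧ Associated p f := by
  obtain ⟨u, hu⟩ := hq.isUnit_leadingCoeff_of_dvd hpq
  refine ⟨p * Polynomial.C (↑u⁻¹ : R), ?_, Units.map (Polynomial.C (R := R)).toMonoidHom u⁻¹, rfl⟩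
  exact Polynomial.monic_mul_C_of_leadingCoeff_mul_eq_one (by rw [← hu, Units.mul_inv])

theorem exists_prime_monic_dvd_map_eq_zero [IsDomain R] [UniqueFactorizationMonoid R]
    {S : Type*} [CommRing S] [IsDomain S] (ε : R[X] →+* S) {q : R[X]} (hq : q.Monic)
    (hεq : ε q = 0) : ∃ f, Prime f ∧ f.Monic ∧ f ∣ q ∧ ε f = 0 := by
  obtain ⟨s, hs, hsq⟩ := UniqueFactorizationMonoid.exists_prime_factors q hq.ne_zero
  have hεs : (s.map ε).prod = 0 := by
    rw [← map_multiset_prod, (hsq.map ε).eq_zero_iff, hεq]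
  obtain ⟨p, hp, hεp⟩ := Multiset.mem_map.mp (Multiset.prod_eq_zero_iff.mp hεs)
  have hpq : p ∣ q := (Multiset.dvd_prod hp).trans hsq.dvd
  obtain ⟨f, hf, hpf⟩ := exists_monic_associated_of_dvd hq hpq
  exact ⟨f, hpf.prime (hs p hp), hf, hpf.dvd_iff_dvd_left.mp hpq, (hpf.map ε).eq_zero_iff.mp hεp⟩

theorem map_eq_self_of_prime_of_not_dvd (σ : R →+* R) {f g : R[X]} (hf : Prime f) (hfm : f.Monic)
    (hσ : (f * g).map σ = f * g) (hfg : ¬ f ∣ g.map σ) : f.map σ = f := by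
  have hdvd : f ∣ f.map σ * g.map σ := ⟨g, by rw [← Polynomial.map_mul, hσ]⟩
  exact Polynomial.eq_of_monic_of_dvd_of_natDegree_le hfm (hfm.map σ)
    ((hf.dvd_or_dvd hdvd).resolve_right hfg) Polynomial.natDegree_map_le

theorem evalEval_zero_map_comp_neg_X (f : R[X][X]) (y : R) :
    (f.map (Polynomial.compRingHom (-Polynomial.X))).evalEval 0 y = f.evalEval 0 y := by
  have h : (Polynomial.evalRingHom (0 : R)).comp (Polynomial.compRingHom (-Polynomial.X)) =
      Polynomial.evalRingHom 0 := by
    ext <;> simp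
  rw [← Polynomial.map_evalRingHom_eval, Polynomial.map_map, h, Polynomial.map_evalRingHom_eval]

theorem rootMultiplicity_map_evalRingHom_pos [Nontrivial R] {f : R[X][X]} (hf : f.Monic)
    {y : R} (hy : f.evalEval 0 y = 0) :
    0 < (f.map (Polynomial.evalRingHom 0)).rootMultiplicity y := by
  rw [Polynomial.rootMultiplicity_pos (hf.map _).ne_zero, Polynomial.IsRoot,
    Polynomial.map_evalRingHom_eval, hy]

theorem C_X_sq_dvd_sub_map_C_of_map_comp_neg_X_eq_self [IsDomain R]
    [NeZero (2 : R)] {f : R[X][X]} (hf : f.map (Polynomial.compRingHom (-Polynomial.X)) = f) :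
    Polynomial.C (Polynomial.X ^ 2) ∣
      f - (f.map (Polynomial.evalRingHom 0)).map Polynomial.C := by
  refine (Polynomial.C_dvd_iff_dvd_coeff _ _).mpr fun i =>
    Polynomial.X_pow_dvd_iff.mpr fun d hd => ?_
  obtain rfl | rfl : d = 0 ∨ d = 1 := by omega
  · simp [Polynomial.coeff_zero_eq_eval_zero]
  · have h := congrArg (fun p => (p.coeff i).derivative.eval 0) hf
    have h2 : 2 * (f.coeff i).derivative.eval 0 = 0 := by
      simp only [Polynomial.coeff_map, Polynomial.coe_compRingHom, Polynomial.derivative_comp,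
        Polynomial.derivative_neg, Polynomial.derivative_X, neg_mul, one_mul, Polynomial.eval_neg,
        Polynomial.eval_comp, Polynomial.eval_X, neg_zero] at h
      linear_combination -h
    have h0 := (mul_eq_zero.mp h2).resolve_left two_ne_zero
    rw [← Polynomial.coeff_zero_eq_eval_zero, Polynomial.coeff_derivative] at h0
    simpa [Polynomial.coeff_C] using h0

end Factors

/-! ### Total degree -/

/-- The identification of `K[λ, μ]` with `K[μ][λ]`: the outer variable is `λ = X 0`, the inner one
`μ = X 1`. It is built on `finSuccEquiv` to inherit the bounds on total degrees of coefficients. -/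
noncomputable def bivariateEquiv (K : Type*) [CommRing K] : MvPolynomial (Fin 2) K ≃ₐ[K] K[X][X] :=
  (finSuccEquiv K 1).trans (Polynomial.mapAlgEquiv (uniqueAlgEquiv K (Fin 1)))

section TotalDegree

variable {K : Type*} [CommRing K]

theorem bivariateEquiv_X_zero : bivariateEquiv K (X 0) = Polynomial.X := by
  simp [bivariateEquiv, finSuccEquiv_X_zero]

theorem bivariateEquiv_X_one : bivariateEquiv K (X 1) = Polynomial.C Polynomial.X := by
  simp [bivariateEquiv, show finSuccEquiv K 1 (X 1) = Polynomial.C (X 0) from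
    finSuccEquiv_X_succ (j := 0)]

theorem bivariateEquiv_C (c : K) : bivariateEquiv K (C c) = Polynomial.C (Polynomial.C c) :=
  (bivariateEquiv K).commutes c

theorem natDegree_uniqueAlgEquiv_le {σ : Type*} [Unique σ] (p : MvPolynomial σ K) :
    (uniqueAlgEquiv K σ p).natDegree ≤ p.totalDegree := by
  refine Polynomial.natDegree_le_iff_coeff_eq_zero.mpr fun n hn => ?_
  rw [coeff_uniqueAlgEquiv]
  exact coeff_eq_zero_of_totalDegree_lt (by rwa [← Finsupp.degree_apply, Finsupp.degree_single])

theorem natDegree_coeff_bivariateEquiv_add_le (p : MvPolynomial (Fin 2) K) {i : ℕ}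
    (hi : (bivariateEquiv K p).coeff i ≠ 0) :
    ((bivariateEquiv K p).coeff i).natDegree + i ≤ p.totalDegree := by
  have hcoeff : (bivariateEquiv K p).coeff i =
      uniqueAlgEquiv K (Fin 1) ((finSuccEquiv K 1 p).coeff i) := by
    simp [bivariateEquiv]
  rw [hcoeff] at hi ⊢
  have h := totalDegree_coeff_finSuccEquiv_add_le p i (by rintro h; simp [h] at hi)
  linarith [natDegree_uniqueAlgEquiv_le ((finSuccEquiv K 1 p).coeff i)]

theorem totalDegree_bivariateEquiv_symm_C_le (p : K[X]) :
    ((bivariateEquiv K).symm (Polynomial.C p)).totalDegree ≤ p.natDegree := by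
  conv_lhs => rw [p.as_sum_range_C_mul_X_pow]
  rw [map_sum, map_sum]
  refine totalDegree_finsetSum_le fun i hi => ?_
  have hterm : (bivariateEquiv K).symm
      (Polynomial.C (Polynomial.C (p.coeff i) * Polynomial.X ^ i)) =
        monomial (Finsupp.single 1 i) (p.coeff i) := by
    rw [AlgEquiv.symm_apply_eq, ← C_mul_X_pow_eq_monomial]
    simp only [map_mul, map_pow, bivariateEquiv_C, bivariateEquiv_X_one]
  rw [hterm]
  refine (totalDegree_monomial_le _ _).trans ?_
  rw [Finsupp.sum_single_index rfl]
  exact Finset.mem_range_succ_iff.mp hi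

theorem totalDegree_det_le {σ n : Type*} [Fintype n] [DecidableEq n]
    {M : Matrix n n (MvPolynomial σ K)} {d : ℕ} (hM : ∀ i j, (M i j).totalDegree ≤ d) :
    M.det.totalDegree ≤ Fintype.card n * d := by
  rw [det_apply]
  refine totalDegree_finsetSum_le fun π _ => ?_
  refine (totalDegree_smul_le _ _).trans ((totalDegree_finsetProd _ _).trans ?_)
  simpa using Finset.sum_le_card_nsmul Finset.univ _ d fun i _ => hM (π i) i

theorem totalDegree_bivariateEquiv_symm_charpoly_le {n : Type*} [Fintype n] [DecidableEq n]
    {M : Matrix n n K[X]} (hM : ∀ i j, (M i j).natDegree ≤ 1) :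
    ((bivariateEquiv K).symm M.charpoly).totalDegree ≤ Fintype.card n := by
  rw [charpoly, AlgEquiv.map_det, ← mul_one (Fintype.card n)]
  refine totalDegree_det_le fun i j => ?_
  have hC := (totalDegree_bivariateEquiv_symm_C_le (M i j)).trans (hM i j)
  rw [AlgEquiv.mapMatrix_apply, Matrix.map_apply, charmatrix_apply, map_sub]
  refine (totalDegree_sub _ _).trans (max_le ?_ hC)
  rw [diagonal_apply]
  split_ifs
  · rw [(AlgEquiv.symm_apply_eq _).mpr (bivariateEquiv_X_zero (K := K)).symm]
    exact (totalDegree_monomial_le _ _).trans (Finsupp.sum_single_index rfl).le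
  · simp

end TotalDegree

theorem natDegree_nextCoeff_le_one_of_mul_eq {K : Type*} [CommRing K] [IsDomain K]
    {p : MvPolynomial (Fin 2) K} (hp : p.totalDegree ≤ (bivariateEquiv K p).natDegree)
    {f g : K[X][X]} (hf : f.Monic) (hg : g.Monic) (hfg : f * g = bivariateEquiv K p) :
    f.nextCoeff.natDegree ≤ 1 := by
  have hdeg {h : K[X][X]} (hh : h.Monic) :
      h.natDegree ≤ ((bivariateEquiv K).symm h).totalDegree := by
    simpa [hh.coeff_natDegree] using
      natDegree_coeff_bivariateEquiv_add_le ((bivariateEquiv K).symm h) (i := h.natDegree)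
  have htot : p.totalDegree =
      ((bivariateEquiv K).symm f).totalDegree + ((bivariateEquiv K).symm g).totalDegree := by
    rw [← totalDegree_mul_of_isDomain (by simpa using hf.ne_zero) (by simpa using hg.ne_zero),
      ← map_mul, hfg, AlgEquiv.symm_apply_apply]
  rw [← hfg, hf.natDegree_mul hg] at hp
  by_cases hf0 : f.natDegree = 0
  · simp [Polynomial.nextCoeff, hf0]
  · by_cases hnext : f.nextCoeff = 0
    · simp [hnext]
    rw [Polynomial.nextCoeff_of_natDegree_pos (by omega)] at hnext ⊢
    have h := natDegree_coeff_bivariateEquiv_add_le ((bivariateEquiv K).symm f)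
      (i := f.natDegree - 1) (by simpa using hnext)
    rw [AlgEquiv.apply_symm_apply] at h
    have hgdeg := hdeg hg
    omega

/-! ### Eigenvectors over a local ring -/

/-- A solution `v` of the eigenvector equations of `-H_l` for the eigenvalue `κ`, with `μ = t` and
with a unit entry at `a`. Sequences are indexed by `ℤ` so that no boundary rows need separate
treatment: an eigenvector extended by zero still solves rows `-1` and `l`, where the coefficients
`i + 1` and `l - i` vanish. -/
structure IsPrimitiveSolution {A : Type*} [CommRing A] (l : ℤ) (t κ : A) (v : ℤ → A) (a : ℤ) :
    Prop where
  recurrence (i : ℤ) :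
    (κ - (i * (l - i) : ℤ)) * v i + t * ((i + 1) * v (i + 1) + (l - i) * v (i - 1)) = 0
  isUnit_apply : IsUnit (v a)

namespace IsPrimitiveSolution

section LocalRing

variable {A : Type*} [CommRing A] [IsLocalRing A] {l a : ℤ} {t κ : A} {v : ℤ → A}

theorem residue_eq (hv : IsPrimitiveSolution l t κ v a) (ht : t ∈ maximalIdeal A) :
    residue A κ = (a * (l - a) : ℤ) := by
  have h := congrArg (residue A) (hv.recurrence a)
  have hva : residue A (v a) ≠ 0 := (residue_ne_zero_iff_isUnit _).mpr hv.isUnit_apply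
  simpa [(residue_eq_zero_iff t).mpr ht, hva, sub_eq_zero] using h

variable [CharZero (ResidueField A)]

theorem isUnit_sub (hv : IsPrimitiveSolution l t κ v a) (ht : t ∈ maximalIdeal A) {i : ℤ}
    (hia : i ≠ a) (hil : i ≠ l - a) : IsUnit (κ - (i * (l - i) : ℤ)) := by
  rw [← residue_ne_zero_iff_isUnit, map_sub, hv.residue_eq ht, map_intCast, ← Int.cast_sub,
    Int.cast_ne_zero, show a * (l - a) - i * (l - i) = (i - a) * (i - (l - a)) by ring]
  exact mul_ne_zero (sub_ne_zero.mpr hia) (sub_ne_zero.mpr hil)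

theorem residue_apply_eq_zero (hv : IsPrimitiveSolution l t κ v a) (ht : t ∈ maximalIdeal A)
    {i : ℤ} (hia : i ≠ a) (hil : i ≠ l - a) : residue A (v i) = 0 := by
  have h := congrArg (residue A) (hv.recurrence i)
  have hi := (residue_ne_zero_iff_isUnit _).mpr (hv.isUnit_sub ht hia hil)
  rw [map_add, map_mul, map_mul, (residue_eq_zero_iff t).mpr ht, zero_mul, add_zero, map_zero] at h
  exact (mul_eq_zero.mp h).resolve_left hi

theorem exists_mul_apply_eq (hv : IsPrimitiveSolution l t κ v a) (ht : t ∈ maximalIdeal A)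
    {i : ℤ} (hi : i = a ∨ i = l - a) (hsucc : l - 2 * i ≠ 1) (hpred : l - 2 * i ≠ -1) :
    ∃ w, (κ - (a * (l - a) : ℤ)) * v i = t ^ 2 * w ∧
      (1 - (l - 2 * i) ^ 2) * residue A w =
        (l - 2 * i + 1) * (i + 1) *
            ((i + 2) * residue A (v (i + 2)) + (l - i - 1) * residue A (v i)) -
          (l - 2 * i - 1) * (l - i) *
            (i * residue A (v i) + (l - i + 1) * residue A (v (i - 2))) := by
  have hD : i * (l - i) = a * (l - a) := by rcases hi with rfl | rfl <;> ring
  have hsuccunit := hv.isUnit_sub ht (i := i + 1) (by omega) (by omega)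
  have hpredunit := hv.isUnit_sub ht (i := i - 1) (by omega) (by omega)
  obtain ⟨p, hp⟩ := hsuccunit.exists_right_inv
  obtain ⟨m, hm⟩ := hpredunit.exists_right_inv
  have hrow := hv.recurrence i
  have hsuccrow := hv.recurrence (i + 1)
  have hpredrow := hv.recurrence (i - 1)
  rw [hD] at hrow
  simp only [show i + 1 + 1 = i + 2 by ring, show i - 1 - 1 = i - 2 by ring,
    add_sub_cancel_right, sub_add_cancel] at hsuccrow hpredrow
  have hresp := congrArg (residue A) hp
  have hresm := congrArg (residue A) hm
  rw [map_mul, map_sub, hv.residue_eq ht, ← hD] at hresp hresm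
  -- Rows `i ± 1` express `v (i ± 1)` as `-t` times a combination of `v i` and `v (i ± 2)`; row `i`
  -- then gives `w`.
  refine ⟨p * ((i + 1) * ((i + 2) * v (i + 2) + (l - i - 1) * v i)) +
    m * ((l - i) * (i * v i + (l - i + 1) * v (i - 2))), ?_, ?_⟩
  · push_cast at *
    linear_combination hrow - t * (i + 1) * p * hsuccrow - t * (l - i) * m * hpredrow
      + t * (i + 1) * v (i + 1) * hp + t * (l - i) * v (i - 1) * hm
  · push_cast at *
    simp only [map_add, map_mul, map_sub, map_one, map_intCast, map_ofNat] at *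
    linear_combination
      (l - 2 * i + 1) * ((i + 1) *
        ((i + 2) * residue A (v (i + 2)) + (l - i - 1) * residue A (v i))) * hresp -
      (l - 2 * i - 1) * ((l - i) *
        (i * residue A (v i) + (l - i + 1) * residue A (v (i - 2)))) * hresm

theorem exists_eq_add_sq_mul (hv : IsPrimitiveSolution l t κ v a) (ht : t ∈ maximalIdeal A)
    (hsucc : l - 2 * a ≠ 1) (hpred : l - 2 * a ≠ -1) :
    ∃ ρ, κ = (a * (l - a) : ℤ) + t ^ 2 * ρ := by
  obtain ⟨w, hw, -⟩ := hv.exists_mul_apply_eq ht (.inl rfl) hsucc hpred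
  obtain ⟨u, hu⟩ := hv.isUnit_apply.exists_right_inv
  exact ⟨w * u, by linear_combination u * hw - (κ - (a * (l - a) : ℤ)) * hu⟩

end LocalRing

section Domain

variable {A : Type*} [CommRing A] [IsDomain A] [IsLocalRing A] [CharZero (ResidueField A)]
  {l a : ℤ} {t κ : A} {v : ℤ → A}

theorem residue_mul_residue_apply_eq {ρ : A} (hv : IsPrimitiveSolution l t κ v a)
    (ht : t ∈ maximalIdeal A) (ht0 : t ≠ 0) (hρ : κ = (a * (l - a) : ℤ) + t ^ 2 * ρ)
    {i : ℤ} (hi : i = a ∨ i = l - a) (hsucc : l - 2 * i ≠ 1) (hpred : l - 2 * i ≠ -1) :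
    (1 - (l - 2 * i) ^ 2) * (residue A ρ * residue A (v i)) =
      (l - 2 * i + 1) * (i + 1) *
          ((i + 2) * residue A (v (i + 2)) + (l - i - 1) * residue A (v i)) -
        (l - 2 * i - 1) * (l - i) *
          (i * residue A (v i) + (l - i + 1) * residue A (v (i - 2))) := by
  obtain ⟨w, hw, hres⟩ := hv.exists_mul_apply_eq ht hi hsucc hpred
  obtain rfl : ρ * v i = w := mul_left_cancel₀ (pow_ne_zero 2 ht0) <| by
    linear_combination hw - v i * hρ
  rw [← hres, map_mul]

theorem residue_eq_of_two_lt_abs {ρ : A} (hv : IsPrimitiveSolution l t κ v a)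
    (ht : t ∈ maximalIdeal A) (ht0 : t ≠ 0) (hρ : κ = (a * (l - a) : ℤ) + t ^ 2 * ρ)
    (hx : 2 < |l - 2 * a|) :
    2 * (1 - (l - 2 * a) ^ 2) * residue A ρ = l ^ 2 + (l - 2 * a) ^ 2 - 2 := by
  rw [lt_abs] at hx
  have h := hv.residue_mul_residue_apply_eq ht ht0 hρ (.inl rfl) (by omega) (by omega)
  rw [hv.residue_apply_eq_zero ht (i := a + 2) (by omega) (by omega),
    hv.residue_apply_eq_zero ht (i := a - 2) (by omega) (by omega)] at h
  refine mul_right_cancel₀ ((residue_ne_zero_iff_isUnit _).mpr hv.isUnit_apply) ?_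
  linear_combination 2 * h

theorem sq_residue_eq_of_abs_eq_two {c : ℤ} {ρ : A}
    (hv : IsPrimitiveSolution (2 * c + 2) t κ v a) (ha : a = c ∨ a = c + 2)
    (ht : t ∈ maximalIdeal A) (ht0 : t ≠ 0) (hρ : κ = (c * (c + 2) : ℤ) + t ^ 2 * ρ) :
    (3 * residue A ρ + (2 * c ^ 2 + 4 * c + 3)) ^ 2 = 9 * c * (c + 1) ^ 2 * (c + 2) := by
  have hD : a * (2 * c + 2 - a) = c * (c + 2) := by rcases ha with rfl | rfl <;> ring
  have hlo := hv.residue_mul_residue_apply_eq ht ht0 (hD ▸ hρ) (i := c) (by omega) (by omega)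
    (by omega)
  have hhi := hv.residue_mul_residue_apply_eq ht ht0 (hD ▸ hρ) (i := c + 2) (by omega) (by omega)
    (by omega)
  rw [hv.residue_apply_eq_zero ht (i := c - 2) (by omega) (by omega)] at hlo
  rw [hv.residue_apply_eq_zero ht (i := c + 2 + 2) (by omega) (by omega), add_sub_cancel_right]
    at hhi
  push_cast at hlo hhi
  set E := 3 * residue A ρ + (2 * c ^ 2 + 4 * c + 3) with hE
  replace hlo : E * residue A (v c) = -3 * (c + 1) * (c + 2) * residue A (v (c + 2)) := by
    linear_combination -hlo
  replace hhi : E * residue A (v (c + 2)) = -3 * c * (c + 1) * residue A (v c) := by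
    linear_combination -hhi
  refine mul_right_cancel₀ ((residue_ne_zero_iff_isUnit _).mpr hv.isUnit_apply) ?_
  rcases ha with rfl | rfl
  · linear_combination E * hlo - 3 * (a + 1) * (a + 2) * hhi
  · linear_combination E * hhi - 3 * c * (c + 1) * hlo

theorem not_sq_dvd_sub_of_abs_eq_one (hv : IsPrimitiveSolution l t κ v a)
    (ht : t ∈ maximalIdeal A) (ht0 : t ≠ 0) (hl : 2 ≤ l) (hx : |l - 2 * a| = 1) :
    ¬ t ^ 2 ∣ κ - (a * (l - a) : ℤ) := by
  rintro ⟨s, hs⟩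
  have hva : residue A (v a) ≠ 0 := (residue_ne_zero_iff_isUnit _).mpr hv.isUnit_apply
  have ha0 : (a : ResidueField A) ≠ 0 := by
    rw [abs_eq zero_le_one] at hx
    exact_mod_cast (by omega : a ≠ 0)
  have hrow := hv.recurrence (l - a)
  rw [show (l - a) * (l - (l - a)) = a * (l - a) by ring, hs] at hrow
  have hcancel : t * s * v (l - a) + ((l - a : ℤ) + 1) * v (l - a + 1) +
      (l - (l - a : ℤ)) * v (l - a - 1) = 0 :=
    mul_left_cancel₀ ht0 (by linear_combination hrow)
  replace hcancel := congrArg (residue A) hcancel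
  push_cast at hcancel
  simp only [map_add, map_mul, map_sub, map_one, map_intCast, map_zero,
    (residue_eq_zero_iff t).mpr ht, zero_mul, zero_add] at hcancel
  rcases (abs_eq zero_le_one).mp hx with hx | hx
  · obtain rfl : l = 2 * a + 1 := by omega
    rw [hv.residue_apply_eq_zero ht (i := 2 * a + 1 - a + 1) (by omega) (by omega),
      show 2 * a + 1 - a - 1 = a by ring] at hcancel
    push_cast at hcancel
    exact mul_ne_zero ha0 hva (by linear_combination hcancel)
  · obtain rfl : l = 2 * a - 1 := by omega
    rw [hv.residue_apply_eq_zero ht (i := 2 * a - 1 - a - 1) (by omega) (by omega),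
      show 2 * a - 1 - a + 1 = a by ring] at hcancel
    push_cast at hcancel
    exact mul_ne_zero ha0 hva (by linear_combination hcancel)

end Domain

end IsPrimitiveSolution

/-! ### Second-order shifts of eigenvalues -/

theorem ratCast_add_mul_ne_zero {k : Type*} [Field k] [CharZero k] {l : ℤ} (hl : 2 ≤ l) {θ : k}
    (hθ : θ ^ 2 = (l : k) ^ 2 - 4) {q : ℚ} (hq : q < 0) (n : ℚ) : (q + n * θ : k) ≠ 0 := by
  intro h
  have hn : n ≠ 0 := by
    rintro rfl
    exact hq.ne (by simpa using h)
  obtain rfl : θ = (-q / n : ℚ) := by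
    push_cast
    rw [eq_div_iff (by exact_mod_cast hn)]
    linear_combination h
  have hr : (-q / n) ^ 2 = (l ^ 2 - 4 : ℤ) := by exact_mod_cast hθ
  obtain ⟨m, hm⟩ := Rat.isSquare_intCast_iff.mp ⟨-q / n, by rw [← hr, sq]⟩
  have hml : |m| < l := abs_lt_of_sq_lt_sq (by linarith [sq m]) (by omega)
  have hl2 : l = 2 := by nlinarith [sq_abs m, abs_nonneg m]
  simp [hl2, hn, hq.ne] at hr

/-- `κ` differs from an integer by `t ^ 2 * ρ`, where `ρ` reduces to an element of `q + ℚ θ` with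
`q < 0`. This is the second-order shift of the eigenvalues of `-H_l` away from the middle, with
`θ = √(l ^ 2 - 4)`; its sign survives in sums. -/
def IsNegativelyShifted {A : Type*} [CommRing A] [IsLocalRing A] (θ : ResidueField A) (t κ : A) :
    Prop :=
  ∃ (D : ℤ) (ρ : A) (q n : ℚ), κ = D + t ^ 2 * ρ ∧ residue A ρ = q + n * θ ∧ q < 0

section NegativeShift

variable {A : Type*} [CommRing A] [IsLocalRing A] [CharZero (ResidueField A)]
  {θ : ResidueField A} {t : A}

theorem IsNegativelyShifted.add {κ κ' : A} :
    IsNegativelyShifted θ t κ → IsNegativelyShifted θ t κ' → IsNegativelyShifted θ t (κ + κ') := by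
  rintro ⟨D, ρ, q, n, rfl, hρ, hq⟩ ⟨D', ρ', q', n', rfl, hρ', hq'⟩
  refine ⟨D + D', ρ + ρ', q + q', n + n', by push_cast; ring, ?_, add_neg hq hq'⟩
  rw [map_add, hρ, hρ']; push_cast; ring

theorem IsNegativelyShifted.multiset_sum {s : Multiset A} (hs : s ≠ 0)
    (h : ∀ κ ∈ s, IsNegativelyShifted θ t κ) : IsNegativelyShifted θ t s.sum :=
  Multiset.sum_induction_nonempty _ (fun _ _ => IsNegativelyShifted.add) hs h

theorem IsPrimitiveSolution.isNegativelyShifted [IsDomain A] {l a : ℤ} {κ : A} {v : ℤ → A}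
    (hv : IsPrimitiveSolution l t κ v a) (ht : t ∈ maximalIdeal A) (ht0 : t ≠ 0)
    (hx : 2 ≤ |l - 2 * a|) (hθ : θ ^ 2 = (l : ResidueField A) ^ 2 - 4) :
    IsNegativelyShifted θ t κ := by
  obtain ⟨ρ, hρ⟩ := hv.exists_eq_add_sq_mul ht (by rintro h; simp [h] at hx)
    (by rintro h; simp [h] at hx)
  rcases hx.lt_or_eq with hx | hx
  · have hx2 : (2 ^ 2 : ℚ) < (l - 2 * a) ^ 2 := by
      exact_mod_cast sq_abs (l - 2 * a) ▸ pow_lt_pow_left₀ hx zero_le_two two_ne_zero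
    have hden : 2 * (1 - (l - 2 * a : ℚ) ^ 2) < 0 := by linarith
    have hden' : 2 * (1 - (l - 2 * a : ResidueField A) ^ 2) ≠ 0 := by exact_mod_cast hden.ne
    refine ⟨_, ρ, (l ^ 2 + (l - 2 * a) ^ 2 - 2) / (2 * (1 - (l - 2 * a) ^ 2)), 0, hρ, ?_,
      div_neg_of_pos_of_neg (by linarith [sq_nonneg (l : ℚ)]) hden⟩
    push_cast
    rw [zero_mul, add_zero, eq_div_iff hden', mul_comm]
    exact hv.residue_eq_of_two_lt_abs ht ht0 hρ hx
  · obtain ⟨c, hc, hac⟩ : ∃ c, l = 2 * c + 2 ∧ (a = c ∨ a = c + 2) := by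
      rcases (abs_eq zero_le_two).mp hx.symm with hx | hx
      · exact ⟨a, by omega, .inl rfl⟩
      · exact ⟨a - 2, by omega, .inr (by ring)⟩
    subst hc
    have hD : a * (2 * c + 2 - a) = c * (c + 2) := by rcases hac with rfl | rfl <;> ring
    have hsq := hv.sq_residue_eq_of_abs_eq_two hac ht ht0 (hD ▸ hρ)
    push_cast at hθ
    have hsq' : (3 * residue A ρ + (2 * c ^ 2 + 4 * c + 3)) ^ 2 = (3 * (c + 1) / 2 * θ) ^ 2 := by
      linear_combination hsq - 9 / 4 * (c + 1) ^ 2 * hθ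
    have hq : -((2 * c ^ 2 + 4 * c + 3) / 3 : ℚ) < 0 := by nlinarith [sq_nonneg (c + 1 : ℚ)]
    rcases sq_eq_sq_iff_eq_or_eq_neg.mp hsq' with h | h
    · refine ⟨_, ρ, _, (c + 1) / 2, hρ, ?_, hq⟩
      push_cast
      linear_combination h / 3
    · refine ⟨_, ρ, _, -(c + 1) / 2, hρ, ?_, hq⟩
      push_cast
      linear_combination h / 3

theorem not_isNegativelyShifted_add_mul [IsDomain A] {K : Type*} [Field K] (ψ : K →+* A)
    (α β : K) {l : ℤ} (hl : 2 ≤ l) (ht : t ∈ maximalIdeal A) (ht0 : t ≠ 0)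
    (hθ : θ ^ 2 = (l : ResidueField A) ^ 2 - 4) :
    ¬ IsNegativelyShifted θ t (ψ β + ψ α * t) := by
  rintro ⟨D, ρ, q, n, h, hρ, hq⟩
  have hrt : residue A t = 0 := (residue_eq_zero_iff t).mpr ht
  have hβ : β = D := by
    have hres := congrArg (residue A) h
    simp only [map_add, map_mul, hrt, mul_zero, add_zero, map_pow, zero_pow two_ne_zero, zero_mul,
      map_intCast] at hres
    exact ((residue A).comp ψ).injective (by simpa using hres)
  have hlin : ψ α = t * ρ :=
    mul_right_cancel₀ ht0 (by rw [hβ, map_intCast] at h; linear_combination h)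
  have hα : α = 0 := by
    apply ((residue A).comp ψ).injective
    rw [RingHom.comp_apply, hlin, map_mul, hrt, zero_mul, map_zero]
  have hρ0 : ρ = 0 := by
    rw [hα, map_zero, eq_comm] at hlin
    exact (mul_eq_zero.mp hlin).resolve_left ht0
  exact ratCast_add_mul_ne_zero hl hθ hq n (by rw [← hρ, hρ0, map_zero])

end NegativeShift

/-! ### The characteristic polynomial -/

/-- The matrix `-H_l` at `μ = t`, with rows and columns counted from `0`. The sign makes its
characteristic polynomial `det (λ + H_l)`. -/
def spectralMatrix {R : Type*} [CommRing R] (l : ℕ) (t : R) : Matrix (Fin l) (Fin l) R :=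
  Matrix.of fun i j =>
    if (i : ℕ) = j then ((i * (l - i) : ℕ) : R)
    else if (i : ℕ) + 1 = j then -(t * (i + 1 : ℕ))
    else if (j : ℕ) + 1 = i then -(t * (l - i : ℕ))
    else 0

section SpectralMatrix

variable {R : Type*} [CommRing R] {l : ℕ}

theorem map_spectralMatrix {S : Type*} [CommRing S] (φ : R →+* S) (t : R) :
    (spectralMatrix l t).map φ = spectralMatrix l (φ t) := by
  ext i j
  simp only [spectralMatrix, Matrix.map_apply, of_apply]
  split_ifs <;> simp

theorem map_charpoly_spectralMatrix {S : Type*} [CommRing S] (φ : R →+* S) (t : R) :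
    (spectralMatrix l t).charpoly.map φ = (spectralMatrix l (φ t)).charpoly := by
  rw [← charpoly_map, map_spectralMatrix]

theorem charpoly_spectralMatrix_zero :
    (spectralMatrix l (0 : R)).charpoly =
      ∏ i ∈ Finset.range l, (Polynomial.X - Polynomial.C ((i * (l - i) : ℕ) : R)) := by
  have hdiag : spectralMatrix l (0 : R) = diagonal fun i : Fin l => ((i * (l - i) : ℕ) : R) := by
    ext i j
    simp [spectralMatrix, diagonal_apply, Fin.ext_iff]
  rw [hdiag, charpoly_diagonal, Finset.prod_range]

theorem evalEval_zero_zero_charpoly_spectralMatrix (hl : 0 < l) :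
    (spectralMatrix l (Polynomial.X : R[X])).charpoly.evalEval 0 0 = 0 := by
  rw [← Polynomial.map_evalRingHom_eval, map_charpoly_spectralMatrix,
    Polynomial.coe_evalRingHom, Polynomial.eval_X, charpoly_spectralMatrix_zero,
    Polynomial.eval_prod]
  exact Finset.prod_eq_zero (Finset.mem_range.mpr hl) (by simp)

theorem charpoly_spectralMatrix_neg (t : R) :
    (spectralMatrix l (-t)).charpoly = (spectralMatrix l t).charpoly := by
  have hconj : spectralMatrix l (-t) = diagonal (fun i : Fin l => (-1 : R) ^ (i : ℕ)) *
      (spectralMatrix l t * diagonal fun i : Fin l => (-1 : R) ^ (i : ℕ)) := by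
    have hsign (n : ℕ) : (-1 : R) ^ n * (-1) ^ n = 1 := by
      rw [← mul_pow, neg_mul_neg, one_mul, one_pow]
    ext i j
    simp only [diagonal_mul, mul_diagonal, spectralMatrix, of_apply]
    split_ifs with h h h
    · rw [h]
      linear_combination -((j * (l - j) : ℕ) : R) * hsign j
    · rw [← h]
      linear_combination -(t * (i + 1 : ℕ)) * hsign i
    · rw [← h]
      linear_combination -(t * (l - (j + 1) : ℕ)) * hsign j
    · rw [zero_mul, mul_zero]
  rw [hconj, charpoly_mul_comm, mul_assoc, diagonal_mul_diagonal]
  simp [← pow_add]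

theorem natDegree_spectralMatrix_X_apply_le_one (i j : Fin l) :
    (spectralMatrix l (Polynomial.X : R[X]) i j).natDegree ≤ 1 := by
  have hmul (n : ℕ) : (-(Polynomial.X * (n : R[X]))).natDegree ≤ 1 := by
    rw [Polynomial.natDegree_neg]
    exact Polynomial.natDegree_mul_le.trans (by simp [Polynomial.natDegree_X_le])
  simp only [spectralMatrix, of_apply]
  split_ifs
  · simp only [Polynomial.natDegree_natCast, zero_le]
  · exact hmul _
  · exact hmul _
  · simp only [Polynomial.natDegree_zero, zero_le]

theorem scalar_sub_spectralMatrix_mulVec_apply {t κ : R} {v : ℤ → R}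
    (hv : ∀ j : ℤ, ¬(0 ≤ j ∧ j < l) → v j = 0) (i : Fin l) :
    ((scalar (Fin l) κ - spectralMatrix l t) *ᵥ fun j => v j) i =
      (κ - (i * (l - i) : ℤ)) * v i + t * ((i + 1) * v (i + 1) + (l - i) * v (i - 1)) := by
  have hsum (c : R) (m : ℤ) : ∑ j : Fin l, (if (j : ℤ) = m then c * v j else 0) = c * v m := by
    by_cases hm : 0 ≤ m ∧ m < l
    · obtain ⟨m, rfl⟩ := Int.eq_ofNat_of_zero_le hm.1
      rw [Finset.sum_eq_single ⟨m, by omega⟩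
        (fun j _ hj => if_neg (by simpa [Fin.ext_iff] using hj)) (by simp), if_pos rfl]
    · rw [hv m hm, mul_zero]
      exact Finset.sum_eq_zero fun j _ => if_neg (by omega)
  have hil : ((l - i : ℕ) : R) = (l : R) - (i : ℕ) := Nat.cast_sub i.is_lt.le
  rw [mulVec, dotProduct]
  calc _ = ∑ j : Fin l, ((if (j : ℤ) = i then (κ - (i * (l - i) : ℤ)) * v j else 0) +
        (if (j : ℤ) = i + 1 then t * (i + 1) * v j else 0) +
        (if (j : ℤ) = i - 1 then t * (l - i) * v j else 0)) := by
        refine Finset.sum_congr rfl fun j _ => ?_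
        simp only [Matrix.sub_apply, scalar_apply, diagonal_apply, spectralMatrix, of_apply,
          Fin.ext_iff]
        split_ifs <;> first | omega | (push_cast [hil]; ring)
    _ = _ := by
        rw [Finset.sum_add_distrib, Finset.sum_add_distrib, hsum, hsum, hsum]
        ring

theorem exists_isPrimitiveSolution {A : Type*} [CommRing A] [IsDomain A] [ValuationRing A] {t κ : A}
    (hκ : (spectralMatrix l t).charpoly.IsRoot κ) :
    ∃ v a, IsPrimitiveSolution l t κ v a := by
  rw [Polynomial.IsRoot, eval_charpoly] at hκ
  obtain ⟨u, hu, a, ha⟩ := exists_mulVec_eq_zero_and_isUnit hκ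
  let v (i : ℤ) : A := if h : 0 ≤ i ∧ i < l then u ⟨i.toNat, by omega⟩ else 0
  have hv (i : ℤ) (hi : ¬(0 ≤ i ∧ i < l)) : v i = 0 := dif_neg hi
  have hvu : (fun j : Fin l => v j) = u := funext fun j => by simp [v]
  refine ⟨v, a, fun i => ?_, by rwa [← hvu] at ha⟩
  by_cases hi : 0 ≤ i ∧ i < l
  · obtain ⟨i, rfl⟩ := Int.eq_ofNat_of_zero_le hi.1
    have hrow := scalar_sub_spectralMatrix_mulVec_apply (t := t) (κ := κ) hv ⟨i, by omega⟩
    rw [hvu, hu] at hrow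
    simpa using hrow.symm
  have hsucc : ((i : A) + 1) * v (i + 1) = 0 := by
    rcases eq_or_ne i (-1) with rfl | hi'
    · simp
    · rw [hv _ (by omega), mul_zero]
  have hpred : ((l : ℤ) - i : A) * v (i - 1) = 0 := by
    rcases eq_or_ne i l with rfl | hi'
    · simp
    · rw [hv _ (by omega), mul_zero]
  rw [hv i hi, hsucc, hpred]
  ring

theorem exists_isPrimitiveSolution_of_isRoot_map {A : Type*} [CommRing A] [IsDomain A]
    [ValuationRing A] {φ : R[X] →+* A} {κ : A} {f : R[X][X]}
    (hdvd : f ∣ (spectralMatrix l (Polynomial.X : R[X])).charpoly) (hκ : (f.map φ).IsRoot κ) :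
    ∃ v a, IsPrimitiveSolution l (φ Polynomial.X) κ v a :=
  exists_isPrimitiveSolution <| by
    rw [← map_charpoly_spectralMatrix]
    exact hκ.dvd (Polynomial.map_dvd φ hdvd)

end SpectralMatrix

theorem mul_sub_eq_mul_sub_iff {l a i : ℕ} (ha : a ≤ l) (hi : i ≤ l) :
    i * (l - i) = a * (l - a) ↔ i ∈ ({a, l - a} : Finset ℕ) := by
  have hfactor : (i * (l - i) : ℤ) = a * (l - a) ↔ ((i : ℤ) - a) * (i - (l - a)) = 0 := by
    rw [← sub_eq_zero, ← neg_eq_zero]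
    ring_nf
  rw [Finset.mem_insert, Finset.mem_singleton]
  zify [ha, hi]
  rw [hfactor, mul_eq_zero, sub_eq_zero, sub_eq_zero]

theorem two_le_abs_of_mul_ne {l a : ℤ} (h : a * (l - a) ≠ l / 2 * (l - l / 2)) :
    2 ≤ |l - 2 * a| := by
  by_contra! hlt
  rw [abs_lt] at hlt
  obtain rfl | ha : a = l / 2 ∨ a = l - l / 2 := by omega
  · exact h rfl
  · exact h (by rw [ha]; ring)

theorem rootMultiplicity_charpoly_spectralMatrix_zero {R : Type*} [CommRing R]
    [IsDomain R] [CharZero R] {l a : ℕ} (ha : a ≤ l) :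
    (spectralMatrix l (0 : R)).charpoly.rootMultiplicity ((a * (l - a) : ℤ) : R) =
      (Finset.range l ∩ {a, l - a}).card := by
  classical
  have hprod : (spectralMatrix l (0 : R)).charpoly =
      (((Finset.range l).val.map fun i => ((i * (l - i) : ℕ) : R)).map
        fun a => Polynomial.X - Polynomial.C a).prod := by
    rw [charpoly_spectralMatrix_zero, Multiset.map_map]
    rfl
  have hcast : ((a * (l - a) : ℤ) : R) = (a * (l - a) : ℕ) := by push_cast [ha]; rfl
  rw [← Polynomial.count_roots, hprod, Polynomial.roots_multiset_prod_X_sub_C, Multiset.count_map,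
    hcast, ← Finset.filter_mem_eq_inter, ← Finset.filter_val, Finset.card_val]
  refine congrArg Finset.card (Finset.filter_congr fun i hi => ?_)
  rw [Nat.cast_inj, eq_comm, mul_sub_eq_mul_sub_iff ha (Finset.mem_range.mp hi).le]

/-! ### Factors of the characteristic polynomial -/

section CharpolyFactors

variable {K : Type*} [Field K] {l : ℕ} {f g : K[X][X]}

section Valuation

variable {A : Type*} [CommRing A] {φ : K[X] →+* A} {κ : A}

theorem evalEval_eq_zero_of_isRoot_map [IsLocalRing A] (ht : φ Polynomial.X ∈ maximalIdeal A)
    {d : ℤ} (hd : residue A κ = d) (hκ : (f.map φ).IsRoot κ) : f.evalEval 0 (d : K) = 0 := by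
  apply ((residue A).comp (φ.comp Polynomial.C)).injective
  have h := residue_eval_map ht (d := (d : K)) (by simpa using hd) f
  rw [hκ.eq_zero, map_zero] at h
  simpa using h.symm

theorem sq_dvd_sub_of_isRoot_map [NeZero (2 : K)] [IsLocalRing A]
    (ht : φ Polynomial.X ∈ maximalIdeal A)
    (heven : f.map (Polynomial.compRingHom (-Polynomial.X)) = f) {d : ℤ}
    (hmult : (f.map (Polynomial.evalRingHom 0)).rootMultiplicity (d : K) = 1)
    (hd : residue A κ = d) (hκ : (f.map φ).IsRoot κ) : φ Polynomial.X ^ 2 ∣ κ - d := by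
  have hf0 : f.map (Polynomial.evalRingHom 0) ≠ 0 := by
    intro h
    simp [h] at hmult
  obtain ⟨u, hu, hndvd⟩ :=
    (f.map (Polynomial.evalRingHom 0)).exists_eq_pow_rootMultiplicity_mul_and_not_dvd hf0 (d : K)
  rw [hmult, pow_one] at hu
  have hunit : IsUnit (((u.map Polynomial.C).map φ).eval κ) := by
    rw [← residue_ne_zero_iff_isUnit, residue_eval_map ht (d := (d : K)) (by simpa using hd),
      Polynomial.evalEval_map_C]
    exact (map_ne_zero_iff _ ((residue A).comp (φ.comp Polynomial.C)).injective).mpr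
      (mt Polynomial.dvd_iff_isRoot.mpr hndvd)
  have hdvd := map_dvd (Polynomial.evalRingHom κ) <| Polynomial.map_dvd φ <|
    C_X_sq_dvd_sub_map_C_of_map_comp_neg_X_eq_self heven
  have hκ0 : (f.map φ).eval κ = 0 := hκ
  simpa [hu, hκ0, hunit.dvd_mul_right] using hdvd

variable [IsDomain A] [ValuationRing A]

theorem isNegativelyShifted_of_isRoot_map [CharZero (ResidueField A)] (hφ : Function.Injective φ)
    (ht : φ Polynomial.X ∈ maximalIdeal A) {θ : ResidueField A}
    (hθ : θ ^ 2 = (l : ResidueField A) ^ 2 - 4)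
    (hdvd : f ∣ (spectralMatrix l (Polynomial.X : K[X])).charpoly)
    (hmid : f.evalEval 0 ((l / 2 * (l - l / 2) : ℤ) : K) ≠ 0) (hκ : (f.map φ).IsRoot κ) :
    IsNegativelyShifted θ (φ Polynomial.X) κ := by
  obtain ⟨v, a, hv⟩ := exists_isPrimitiveSolution_of_isRoot_map hdvd hκ
  refine hv.isNegativelyShifted ht ((map_ne_zero_iff φ hφ).mpr Polynomial.X_ne_zero)
    (two_le_abs_of_mul_ne fun h => hmid ?_) (by exact_mod_cast hθ)
  rw [← h]
  exact evalEval_eq_zero_of_isRoot_map ht (hv.residue_eq ht) hκ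

end Valuation

variable [CharZero K]

theorem natDegree_eq_zero_of_natDegree_nextCoeff_le_one (hl : 2 ≤ l) (hf : f.Monic)
    (hdvd : f ∣ (spectralMatrix l (Polynomial.X : K[X])).charpoly)
    (hnext : f.nextCoeff.natDegree ≤ 1)
    (hmid : f.evalEval 0 ((l / 2 * (l - l / 2) : ℤ) : K) ≠ 0) : f.natDegree = 0 := by
  obtain ⟨A, _, _, _, φ, hφ, ht, hsplit⟩ :=
    exists_valuationRing_splits_of_monic (Polynomial.not_isUnit_X (R := K))
  let ψ : K →+* A := φ.comp Polynomial.C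
  have : CharZero (ResidueField A) := charZero_of_injective_ringHom ((residue A).comp ψ).injective
  have ht0 : φ Polynomial.X ≠ 0 := (map_ne_zero_iff φ hφ).mpr Polynomial.X_ne_zero
  obtain ⟨x, hx⟩ := exists_sq_eq_of_splits_of_monic hsplit ((l : A) ^ 2 - 4)
  have hθ : residue A x ^ 2 = (l : ResidueField A) ^ 2 - 4 := by
    rw [← map_pow, hx, map_sub, map_pow, map_natCast, map_ofNat]
  by_contra hdeg
  have hne : (f.map φ).roots ≠ 0 := by
    rw [← Multiset.card_pos, ← (hsplit _ (hf.map φ)).natDegree_eq_card_roots, hf.natDegree_map]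
    exact Nat.pos_of_ne_zero hdeg
  have hshift := IsNegativelyShifted.multiset_sum hne fun κ hκ =>
    isNegativelyShifted_of_isRoot_map hφ ht hθ hdvd hmid (Polynomial.isRoot_of_mem_roots hκ)
  have hsum : (f.map φ).roots.sum =
      ψ (-f.nextCoeff.coeff 0) + ψ (-f.nextCoeff.coeff 1) * φ Polynomial.X := by
    rw [← neg_eq_iff_eq_neg.mpr
        ((hsplit _ (hf.map φ)).nextCoeff_eq_neg_sum_roots_of_monic (hf.map φ)),
      Polynomial.nextCoeff_map hφ]
    conv_lhs => rw [Polynomial.eq_X_add_C_of_natDegree_le_one hnext]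
    simp only [ψ, RingHom.comp_apply, map_add, map_mul, map_neg]
    ring
  exact not_isNegativelyShifted_add_mul ψ _ _ (l := l) (by exact_mod_cast hl) ht ht0
    (by exact_mod_cast hθ) (hsum ▸ hshift)

theorem rootMultiplicity_ne_one_of_map_comp_neg_X_eq_self (hl : 2 ≤ l) (hf : f.Monic)
    (hdvd : f ∣ (spectralMatrix l (Polynomial.X : K[X])).charpoly)
    (heven : f.map (Polynomial.compRingHom (-Polynomial.X)) = f) {a : ℤ} (ha : |l - 2 * a| = 1) :
    (f.map (Polynomial.evalRingHom 0)).rootMultiplicity ((a * (l - a) : ℤ) : K) ≠ 1 := by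
  set d := a * (l - a) with hd
  intro hmult
  obtain ⟨A, _, _, _, φ, hφ, ht, hsplit⟩ :=
    exists_valuationRing_splits_of_monic (Polynomial.not_isUnit_X (R := K))
  have : CharZero (ResidueField A) :=
    charZero_of_injective_ringHom ((residue A).comp (φ.comp Polynomial.C)).injective
  have hf0 : (f.map (Polynomial.evalRingHom 0)).IsRoot (d : K) :=
    (Polynomial.rootMultiplicity_pos'.mp (hmult ▸ one_pos)).2
  have hres : residue A ((f.map φ).eval (d : A)) = 0 := by
    rw [residue_eval_map ht (d := (d : K)) (by simp), ← Polynomial.map_evalRingHom_eval,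
      hf0.eq_zero, Polynomial.C_0, map_zero, map_zero]
  obtain ⟨κ, hκ, hκd⟩ := exists_mem_roots_residue_eq (hf.map φ) (hsplit _ (hf.map φ)) hres
  replace hκ := Polynomial.isRoot_of_mem_roots hκ
  rw [map_intCast] at hκd
  obtain ⟨v, b, hv⟩ := exists_isPrimitiveSolution_of_isRoot_map hdvd hκ
  have hbd : b * (l - b) = d := by exact_mod_cast (hv.residue_eq ht).symm.trans hκd
  have hb : |l - 2 * b| = 1 := by
    rw [← ha, ← sq_eq_sq_iff_abs_eq_abs]
    linear_combination 4 * hd - 4 * hbd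
  refine hv.not_sq_dvd_sub_of_abs_eq_one ht ((map_ne_zero_iff φ hφ).mpr Polynomial.X_ne_zero)
    (by exact_mod_cast hl) hb ?_
  rw [hbd]
  exact sq_dvd_sub_of_isRoot_map ht heven hmult hκd hκ

theorem rootMultiplicity_add_of_mul_eq_charpoly
    (hfg : f * g = (spectralMatrix l (Polynomial.X : K[X])).charpoly) {a : ℕ} (ha : a ≤ l) :
    (f.map (Polynomial.evalRingHom 0)).rootMultiplicity ((a * (l - a) : ℤ) : K) +
      (g.map (Polynomial.evalRingHom 0)).rootMultiplicity ((a * (l - a) : ℤ) : K) =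
      (Finset.range l ∩ {a, l - a}).card := by
  have hmul : f.map (Polynomial.evalRingHom 0) * g.map (Polynomial.evalRingHom 0) =
      (spectralMatrix l (0 : K)).charpoly := by
    rw [← Polynomial.map_mul, hfg, map_charpoly_spectralMatrix, Polynomial.coe_evalRingHom,
      Polynomial.eval_X]
  have hne : f.map (Polynomial.evalRingHom 0) * g.map (Polynomial.evalRingHom 0) ≠ 0 :=
    hmul ▸ (charpoly_monic _).ne_zero
  rw [← Polynomial.rootMultiplicity_mul hne, hmul, rootMultiplicity_charpoly_spectralMatrix_zero ha]

theorem natDegree_eq_zero_of_mul_eq_charpoly (hl : 2 ≤ l) (hf : f.Monic) (hg : g.Monic)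
    (hfg : f * g = (spectralMatrix l (Polynomial.X : K[X])).charpoly)
    (hmid : f.evalEval 0 ((l / 2 * (l - l / 2) : ℤ) : K) ≠ 0) : f.natDegree = 0 := by
  refine natDegree_eq_zero_of_natDegree_nextCoeff_le_one hl hf ⟨g, hfg.symm⟩ ?_ hmid
  refine natDegree_nextCoeff_le_one_of_mul_eq (p := (bivariateEquiv K).symm (f * g)) ?_ hf hg
    (by rw [AlgEquiv.apply_symm_apply])
  rw [AlgEquiv.apply_symm_apply, hfg, charpoly_natDegree_eq_dim]
  exact totalDegree_bivariateEquiv_symm_charpoly_le natDegree_spectralMatrix_X_apply_le_one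

theorem map_comp_neg_X_eq_self_of_evalEval_zero_zero (hf : Prime f) (hfm : f.Monic)
    (hfg : f * g = (spectralMatrix l (Polynomial.X : K[X])).charpoly)
    (hf0 : f.evalEval 0 0 = 0) : f.map (Polynomial.compRingHom (-Polynomial.X)) = f := by
  refine map_eq_self_of_prime_of_not_dvd (g := g) _ hf hfm ?_ fun hdvd => ?_
  · rw [hfg, map_charpoly_spectralMatrix, Polynomial.coe_compRingHom_apply, Polynomial.X_comp,
      charpoly_spectralMatrix_neg]
  · have hg0 : g.evalEval 0 0 = 0 := by
      have h := Polynomial.evalEval_dvd 0 0 hdvd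
      rwa [hf0, zero_dvd_iff, evalEval_zero_map_comp_neg_X] at h
    have hgm : g.Monic := hfm.of_mul_monic_left (hfg ▸ charpoly_monic _)
    have hcard := rootMultiplicity_add_of_mul_eq_charpoly hfg (Nat.zero_le l)
    have hfpos := rootMultiplicity_map_evalRingHom_pos hfm hf0
    have hgpos := rootMultiplicity_map_evalRingHom_pos hgm hg0
    have hle : (Finset.range l ∩ {0, l - 0}).card ≤ 1 := by
      refine Finset.card_le_one.mpr fun i hi j hj => ?_
      simp only [Finset.mem_inter, Finset.mem_range, Finset.mem_insert,
        Finset.mem_singleton] at hi hj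
      omega
    simp only [Nat.cast_zero, zero_mul, Int.cast_zero] at hcard
    omega

theorem irreducible_charpoly_spectralMatrix (hl : 2 ≤ l) :
    Irreducible (spectralMatrix l (Polynomial.X : K[X])).charpoly := by
  obtain ⟨f, hf, hfm, ⟨g, hfg⟩, hf0⟩ := exists_prime_monic_dvd_map_eq_zero
    (Polynomial.evalEvalRingHom (0 : K) 0) (charpoly_monic _)
    (evalEval_zero_zero_charpoly_spectralMatrix (zero_lt_two.trans_le hl))
  have heven := map_comp_neg_X_eq_self_of_evalEval_zero_zero hf hfm hfg.symm hf0
  have hgm : g.Monic := hfm.of_mul_monic_left (hfg ▸ charpoly_monic _)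
  by_cases hgmid : g.evalEval 0 ((l / 2 * (l - l / 2) : ℤ) : K) = 0
  · have hfmid : f.evalEval 0 ((l / 2 * (l - l / 2) : ℤ) : K) = 0 := by
      by_contra hfmid
      have hdeg := natDegree_eq_zero_of_mul_eq_charpoly hl hfm hgm hfg.symm hfmid
      exact hf.not_isUnit (hfm.natDegree_eq_zero.mp hdeg ▸ isUnit_one)
    have hcard := rootMultiplicity_add_of_mul_eq_charpoly hfg.symm (Nat.div_le_self l 2)
    rw [Int.natCast_div, Nat.cast_ofNat] at hcard
    have hfpos := rootMultiplicity_map_evalRingHom_pos hfm hfmid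
    have hgpos := rootMultiplicity_map_evalRingHom_pos hgm hgmid
    have hle : (Finset.range l ∩ {l / 2, l - l / 2}).card ≤ ({l / 2, l - l / 2} : Finset ℕ).card :=
      Finset.card_le_card Finset.inter_subset_right
    have hodd : l / 2 ≠ l - l / 2 := by
      intro heq
      rw [← heq, Finset.pair_eq_singleton] at hle hcard
      rw [Finset.card_singleton] at hle
      omega
    rw [Finset.card_pair hodd] at hle
    refine absurd ?_ (rootMultiplicity_ne_one_of_map_comp_neg_X_eq_self hl hfm ⟨g, hfg⟩ heven
      (a := l / 2) ?_)
    · omega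
    · rw [abs_eq zero_le_one]
      omega
  · have hdeg := natDegree_eq_zero_of_mul_eq_charpoly hl hgm hfm (mul_comm f g ▸ hfg.symm) hgmid
    rw [hfg, hgm.natDegree_eq_zero.mp hdeg, mul_one]
    exact hf.irreducible

end CharpolyFactors

theorem stmt8_general {K : Type*} [Field K] [CharZero K] (l : ℕ) (hl : 2 ≤ l) :
    Irreducible ((Matrix.of fun i j : Fin l =>
      (if (i : ℕ) = (j : ℕ) then X 0 - C (((i : ℕ) * (l - (i : ℕ)) : ℕ) : K)
       else if (i : ℕ) + 1 = (j : ℕ) then X 1 * C ((((i : ℕ) + 1 : ℕ)) : K)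
       else if (j : ℕ) + 1 = (i : ℕ) then X 1 * C (((l - (i : ℕ) : ℕ)) : K)
       else 0 : MvPolynomial (Fin 2) K)).det) := by
  rw [← MulEquiv.irreducible_iff (bivariateEquiv K), AlgEquiv.map_det]
  convert irreducible_charpoly_spectralMatrix (K := K) hl using 1
  rw [charpoly]
  congr 1
  ext i j : 1
  simp only [AlgEquiv.mapMatrix_apply, Matrix.map_apply, of_apply, charmatrix_apply,
    diagonal_apply, spectralMatrix, Fin.ext_iff]
  split_ifs <;>
    simp only [map_sub, map_mul, map_zero, map_neg, sub_neg_eq_add, zero_add, sub_zero, map_natCast,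
      bivariateEquiv_X_zero, bivariateEquiv_X_one]

/-- the polynomial P_l(λ,μ²) = det(H_l + λ·Id) defining the spectral
curve Γ_l is irreducible in ℂ[λ,μ].  Variables: X 0 = λ, X 1 = μ. -/
theorem stmt8 (l : ℕ) (hl : 2 ≤ l) :
    Irreducible
      ((Matrix.of fun i j : Fin l =>
        (if (i : ℕ) = (j : ℕ) then X 0 - C (((i : ℕ) * (l - (i : ℕ)) : ℕ) : ℂ)
        else if (i : ℕ) + 1 = (j : ℕ) then X 1 * C ((((i : ℕ) + 1 : ℕ)) : ℂ)
        else if (j : ℕ) + 1 = (i : ℕ) then X 1 * C (((l - (i : ℕ) : ℕ)) : ℂ)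
        else 0 : MvPolynomial (Fin 2) ℂ)).det) :=
  stmt8_general l hl
end

section
/- Let l ≥ 2 be even. The lowest-degree homogeneous part (in the variables (a, θ)) of det(𝒢_l + (1+a)·Id) after setting μ = 1 and r = 1 + a, and projectivizing with θ, equals the determinant of the (l/2)×(l/2) tridiagonal matrix with diagonal entries (2a - (l/2)θ, 2a, …, 2a), superdiagonal entries ((l/2)+1)θ, ((l/2)+2)θ, …, (l-1)θ, and subdiagonal entries ((l/2)-1)θ, …, 1·θ; and for each fixed θ > 0 this determinant, as a polynomial in a, has l/2 distinct real roots. -/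
open MvPolynomial Matrix

/-!
Pairing the indices `m - 1 - p` and `m + p`, which the antidiagonal interchanges, puts the `2m × 2m`
matrix into `m × m` blocks, all equal to the identity at the singular point. Subtracting the first
block row and column from the second ones leaves an upper left block that is invertible there, while
the other three blocks consist of linear forms in `(a, θ)`; the lower right one is the tridiagonal
matrix. The determinant thus starts in degree `m`, with the determinant of that block.

A tridiagonal determinant only depends on the diagonal and on the products of opposite off-diagonal
entries. If these products are positive, the matrix may therefore be replaced by a real symmetric
one; an eigenvector of the latter is determined by its first coordinate, so that the eigenvalues
are real and simple.
-/

section Dilation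

variable {σ R : Type*} [CommSemiring R]

/-- The dilation `p(x) ↦ p(Tx)`, as a polynomial in `T`. It is used to read off the homogeneous
components of a polynomial, which are the coefficients of the powers of `T`. -/
noncomputable def dilation : MvPolynomial σ R →ₐ[R] Polynomial (MvPolynomial σ R) :=
  aeval fun i => Polynomial.X * Polynomial.C (X i)

theorem dilation_monomial (d : σ →₀ ℕ) (c : R) :
    dilation (monomial d c) = Polynomial.C (monomial d c) * Polynomial.X ^ d.degree := by
  have algebraMap_eq : algebraMap R (Polynomial (MvPolynomial σ R)) c = Polynomial.C (C c) := rfl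
  rw [dilation, aeval_monomial, monomial_eq, algebraMap_eq]
  simp only [mul_pow, Finset.prod_mul_distrib, map_mul, Finsupp.prod, map_prod, map_pow,
    Finset.prod_pow_eq_pow_sum, Finsupp.degree_apply]
  ring

theorem coeff_dilation (p : MvPolynomial σ R) (k : ℕ) :
    (dilation p).coeff k = homogeneousComponent k p := by
  induction p using MvPolynomial.induction_on' with
  | monomial d c =>
    rw [dilation_monomial, Polynomial.coeff_C_mul, Polynomial.coeff_X_pow,
      homogeneousComponent_of_mem (isHomogeneous_monomial c rfl), mul_ite, mul_one, mul_zero]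
  | add p q hp hq => simp only [map_add, Polynomial.coeff_add, hp, hq]

theorem dilation_of_isHomogeneous {p : MvPolynomial σ R} {n : ℕ} (hp : p.IsHomogeneous n) :
    dilation p = Polynomial.C p * Polynomial.X ^ n := by
  ext1 k
  rw [coeff_dilation, homogeneousComponent_of_mem hp, Polynomial.coeff_C_mul,
    Polynomial.coeff_X_pow, mul_ite, mul_one, mul_zero]

theorem eval_zero_dilation (p : MvPolynomial σ R) :
    (dilation p).eval 0 = C (constantCoeff p) := by
  rw [← Polynomial.coeff_zero_eq_eval_zero, coeff_dilation, homogeneousComponent_zero,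
    constantCoeff_eq]

end Dilation

section BlockDeterminants

variable {m n σ R : Type*} [Fintype m] [DecidableEq m] [Fintype n] [DecidableEq n] [CommRing R]

theorem det_fromBlocks_sub_sub (A B C D : Matrix n n R) :
    (fromBlocks A (B - A) (C - A) (D - B - C + A)).det = (fromBlocks A B C D).det := by
  have elimination : fromBlocks A (B - A) (C - A) (D - B - C + A) =
      fromBlocks 1 0 (-1) 1 * fromBlocks A B C D * fromBlocks 1 (-1) 0 1 := by
    simp only [fromBlocks_multiply, one_mul, mul_one, zero_mul, mul_zero, add_zero, neg_mul,
      mul_neg]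
    congr 1 <;> abel
  rw [elimination, det_mul, det_mul, det_fromBlocks_zero₁₂, det_fromBlocks_zero₂₁]
  simp only [det_one, one_mul, mul_one]

variable {A₁₁ : Matrix m m (MvPolynomial σ R)} {A₁₂ : Matrix m n (MvPolynomial σ R)}
  {A₂₁ : Matrix n m (MvPolynomial σ R)} {A₂₂ : Matrix n n (MvPolynomial σ R)} {d : ℕ}

theorem dilation_det_fromBlocks (h₁₂ : ∀ i j, (A₁₂ i j).IsHomogeneous d)
    (h₂₂ : ∀ i j, (A₂₂ i j).IsHomogeneous d) :
    dilation (fromBlocks A₁₁ A₁₂ A₂₁ A₂₂).det = Polynomial.X ^ (d * Fintype.card n) *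
      (fromBlocks (A₁₁.map dilation) (A₁₂.map Polynomial.C) (A₂₁.map dilation)
        (A₂₂.map Polynomial.C)).det := by
  let scaling : m ⊕ n → Polynomial (MvPolynomial σ R) :=
    Sum.elim (fun _ => 1) (fun _ => Polynomial.X ^ d)
  have prod_scaling : ∏ i, scaling i = Polynomial.X ^ (d * Fintype.card n) := by
    simp [scaling, pow_mul]
  rw [AlgHom.map_det, ← prod_scaling, ← det_mul_row]
  congr 1
  ext1 (i | i) (j | j) <;>
    simp [scaling, dilation_of_isHomogeneous (h₁₂ _ _), dilation_of_isHomogeneous (h₂₂ _ _)]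

theorem homogeneousComponent_det_fromBlocks_of_lt (h₁₂ : ∀ i j, (A₁₂ i j).IsHomogeneous d)
    (h₂₂ : ∀ i j, (A₂₂ i j).IsHomogeneous d) {k : ℕ} (hk : k < d * Fintype.card n) :
    homogeneousComponent k (fromBlocks A₁₁ A₁₂ A₂₁ A₂₂).det = 0 := by
  rw [← coeff_dilation, dilation_det_fromBlocks h₁₂ h₂₂, Polynomial.coeff_X_pow_mul',
    if_neg hk.not_ge]

theorem homogeneousComponent_det_fromBlocks (h₁₂ : ∀ i j, (A₁₂ i j).IsHomogeneous d)
    (h₂₁ : ∀ i j, constantCoeff (A₂₁ i j) = 0) (h₂₂ : ∀ i j, (A₂₂ i j).IsHomogeneous d) :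
    homogeneousComponent (d * Fintype.card n) (fromBlocks A₁₁ A₁₂ A₂₁ A₂₂).det =
      C (A₁₁.map constantCoeff).det * A₂₂.det := by
  let N := fromBlocks (A₁₁.map dilation) (A₁₂.map Polynomial.C) (A₂₁.map dilation)
    (A₂₂.map Polynomial.C)
  have eval_zero_N : N.map (Polynomial.evalRingHom 0) =
      fromBlocks ((A₁₁.map constantCoeff).map C) A₁₂ 0 A₂₂ := by
    ext1 (i | i) (j | j) <;> simp [N, eval_zero_dilation, h₂₁]
  calc homogeneousComponent (d * Fintype.card n) (fromBlocks A₁₁ A₁₂ A₂₁ A₂₂).det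
      = N.det.eval 0 := by
        rw [← coeff_dilation, dilation_det_fromBlocks h₁₂ h₂₂, Polynomial.coeff_X_pow_mul',
          if_pos le_rfl, Nat.sub_self, Polynomial.coeff_zero_eq_eval_zero]
    _ = (N.map (Polynomial.evalRingHom 0)).det := RingHom.map_det (Polynomial.evalRingHom 0) N
    _ = C (A₁₁.map constantCoeff).det * A₂₂.det := by
        rw [eval_zero_N, det_fromBlocks_zero₂₁, RingHom.map_det]
        rfl

end BlockDeterminants

section Tridiagonal

variable {R S : Type*}

/-- The `n × n` tridiagonal matrix with diagonal `d`, superdiagonal `u` and subdiagonal `s`. All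
three sequences are indexed by the row, so `s i` stands at `(i, i - 1)` and `s 0` is not used. -/
def tridiagonal [Zero R] (n : ℕ) (d u s : ℕ → R) : Matrix (Fin n) (Fin n) R :=
  of fun i j =>
    if i = j then d i else if (i : ℕ) + 1 = j then u i else if (j : ℕ) + 1 = i then s i else 0

theorem tridiagonal_zero_zero [Zero R] (n : ℕ) (d : ℕ → R) :
    tridiagonal n d 0 0 = diagonal fun i : Fin n => d i := by
  ext i j
  simp only [tridiagonal, of_apply, diagonal_apply, Pi.zero_apply, ite_self]

theorem isSymm_tridiagonal [Zero R] (n : ℕ) (d u : ℕ → R) :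
    (tridiagonal n d u fun i => u (i - 1)).IsSymm := by
  ext i j
  simp only [transpose_apply, tridiagonal, of_apply]
  grind

theorem tridiagonal_sub [AddGroup R] (n : ℕ) (d u s d' u' s' : ℕ → R) :
    tridiagonal n d u s - tridiagonal n d' u' s' = tridiagonal n (d - d') (u - u') (s - s') := by
  ext i j
  simp only [tridiagonal, Matrix.sub_apply, of_apply, Pi.sub_apply]
  split_ifs <;> simp only [sub_zero]

theorem tridiagonal_add [AddZeroClass R] (n : ℕ) (d u s d' u' s' : ℕ → R) :
    tridiagonal n d u s + tridiagonal n d' u' s' = tridiagonal n (d + d') (u + u') (s + s') := by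
  ext i j
  simp only [tridiagonal, Matrix.add_apply, of_apply, Pi.add_apply]
  split_ifs <;> simp only [add_zero]

theorem map_tridiagonal [Zero R] [Zero S] (n : ℕ) (d u s : ℕ → R) {f : R → S} (hf : f 0 = 0) :
    (tridiagonal n d u s).map f = tridiagonal n (f ∘ d) (f ∘ u) (f ∘ s) := by
  ext i j
  simp only [tridiagonal, map_apply, of_apply, Function.comp_apply, apply_ite f, hf]

theorem tridiagonal_submatrix_succ [Zero R] (n : ℕ) (d u s : ℕ → R) :
    (tridiagonal (n + 1) d u s).submatrix Fin.succ Fin.succ =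
      tridiagonal n (fun i => d (i + 1)) (fun i => u (i + 1)) (fun i => s (i + 1)) := by
  ext i j
  simp only [tridiagonal, submatrix_apply, of_apply, Fin.succ_inj, Fin.val_succ, add_left_inj]

theorem isHomogeneous_tridiagonal [CommSemiring R] {σ : Type*} {k : ℕ}
    {d u s : ℕ → MvPolynomial σ R} (hd : ∀ i, (d i).IsHomogeneous k)
    (hu : ∀ i, (u i).IsHomogeneous k) (hs : ∀ i, (s i).IsHomogeneous k) {n : ℕ} (i j : Fin n) :
    (tridiagonal n d u s i j).IsHomogeneous k := by
  simp only [tridiagonal, of_apply]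
  split_ifs
  exacts [hd i, hu i, hs i, isHomogeneous_zero _ _ _]

variable [CommRing R]

theorem det_tridiagonal_submatrix_succ_succAbove_one (n : ℕ) (d u s : ℕ → R) :
    ((tridiagonal (n + 2) d u s).submatrix Fin.succ (Fin.succAbove 1)).det =
      s 1 * (tridiagonal n (fun i => d (i + 2)) (fun i => u (i + 2)) (fun i => s (i + 2))).det := by
  have column_zero : tridiagonal (n + 2) d u s (Fin.succ 0) (Fin.succAbove 1 0) = s 1 := by
    simp [tridiagonal]
  have column_succ (i : Fin n) :
      tridiagonal (n + 2) d u s i.succ.succ (Fin.succAbove 1 0) = 0 := by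
    simp [tridiagonal]
  have minor : ((tridiagonal (n + 2) d u s).submatrix Fin.succ (Fin.succAbove 1)).submatrix
      Fin.succ Fin.succ =
      tridiagonal n (fun i => d (i + 2)) (fun i => u (i + 2)) (fun i => s (i + 2)) := by
    ext i j
    simp [tridiagonal]
  rw [det_succ_column_zero, Fin.sum_univ_succ, Fin.val_zero, pow_zero, one_mul,
    Fin.succAbove_zero, minor, submatrix_apply, column_zero]
  simp only [submatrix_apply, column_succ, mul_zero, zero_mul, Finset.sum_const_zero, add_zero]

theorem det_tridiagonal_succ_succ (n : ℕ) (d u s : ℕ → R) :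
    (tridiagonal (n + 2) d u s).det =
      d 0 * (tridiagonal (n + 1) (fun i => d (i + 1)) (fun i => u (i + 1))
        (fun i => s (i + 1))).det -
      u 0 * s 1 * (tridiagonal n (fun i => d (i + 2)) (fun i => u (i + 2))
        (fun i => s (i + 2))).det := by
  have row_zero : tridiagonal (n + 2) d u s 0 0 = d 0 := by
    simp [tridiagonal]
  have row_one : tridiagonal (n + 2) d u s 0 (Fin.succ 0) = u 0 := by
    simp [tridiagonal]
  have row_succ_succ (j : Fin n) : tridiagonal (n + 2) d u s 0 j.succ.succ = 0 := by
    simp [tridiagonal, Fin.ext_iff]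
  rw [det_succ_row_zero, Fin.sum_univ_succ, Fin.sum_univ_succ, row_zero, row_one,
    Fin.succAbove_zero, tridiagonal_submatrix_succ, Fin.succ_zero_eq_one,
    det_tridiagonal_submatrix_succ_succAbove_one]
  simp only [row_succ_succ, mul_zero, zero_mul, Finset.sum_const_zero, Fin.val_zero, Fin.val_one,
    pow_zero, pow_one]
  ring

theorem det_tridiagonal_congr {n : ℕ} {u s u' s' : ℕ → R} (d : ℕ → R)
    (h : ∀ i, i + 1 < n → u i * s (i + 1) = u' i * s' (i + 1)) :
    (tridiagonal n d u s).det = (tridiagonal n d u' s').det := by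
  induction n using Nat.twoStepInduction generalizing d u s u' s' with
  | zero => simp only [det_fin_zero]
  | one => simp only [det_fin_one, tridiagonal, of_apply, if_true]
  | more n ih ih' =>
    rw [det_tridiagonal_succ_succ, det_tridiagonal_succ_succ, h 0 (by omega),
      ih' _ (u' := fun i => u' (i + 1)) (s' := fun i => s' (i + 1))
        fun i hi => h (i + 1) (by omega),
      ih _ (u' := fun i => u' (i + 2)) (s' := fun i => s' (i + 2))
        fun i hi => h (i + 2) (by omega)]

theorem charpoly_tridiagonal (n : ℕ) (d u s : ℕ → R) :
    (tridiagonal n d u s).charpoly =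
      (tridiagonal n (fun i => Polynomial.X - Polynomial.C (d i)) (fun i => -Polynomial.C (u i))
        (fun i => -Polynomial.C (s i))).det := by
  rw [charpoly]
  congr 1
  ext1 i j
  rcases eq_or_ne i j with rfl | hij
  · simp only [charmatrix_apply_eq, tridiagonal, of_apply, if_true]
  · simp only [charmatrix_apply_ne _ _ _ hij, tridiagonal, of_apply, if_neg hij]
    split_ifs <;> simp only [map_zero, neg_zero]

theorem charpoly_tridiagonal_congr {n : ℕ} {u s u' s' : ℕ → R} (d : ℕ → R)
    (h : ∀ i, i + 1 < n → u i * s (i + 1) = u' i * s' (i + 1)) :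
    (tridiagonal n d u s).charpoly = (tridiagonal n d u' s').charpoly := by
  rw [charpoly_tridiagonal, charpoly_tridiagonal]
  refine det_tridiagonal_congr _ fun i hi => ?_
  rw [neg_mul_neg, neg_mul_neg, ← map_mul, ← map_mul, h i hi]

theorem eval_charpoly_tridiagonal (n : ℕ) (d u s : ℕ → R) (x : R) :
    (tridiagonal n d u s).charpoly.eval x =
      (tridiagonal n (fun i => x - d i) (fun i => -u i) (fun i => -s i)).det := by
  rw [charpoly_tridiagonal, ← Polynomial.coe_evalRingHom, RingHom.map_det,
    RingHom.mapMatrix_apply, map_tridiagonal _ _ _ _ (map_zero _)]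
  congr 2 <;> ext i <;> simp

end Tridiagonal

section SimpleSpectrum

theorem eq_zero_of_mulVec_eq_smul_of_apply_zero {R : Type*} [Semiring R] [NoZeroDivisors R] {n : ℕ}
    {M : Matrix (Fin (n + 1)) (Fin (n + 1)) R}
    (hzero : ∀ i j : Fin (n + 1), (i : ℕ) + 1 < j → M i j = 0)
    (hsuper : ∀ i : Fin n, M i.castSucc i.succ ≠ 0) {μ : R} {v : Fin (n + 1) → R}
    (hv : M *ᵥ v = μ • v) (hv0 : v 0 = 0) : v = 0 := by
  ext i
  induction i using WellFoundedLT.induction with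
  | ind i ih =>
    cases i using Fin.cases with
    | zero => exact hv0
    | succ k =>
      -- Row `k` of the eigenvalue equation expresses `v (k + 1)` by the coordinates before it.
      have row : ∑ j, M k.castSucc j * v j = μ * v k.castSucc := congrFun hv k.castSucc
      rw [Finset.sum_eq_single k.succ, ih _ k.castSucc_lt_succ, Pi.zero_apply, mul_zero] at row
      · exact (mul_eq_zero.mp row).resolve_left (hsuper k)
      · intro j _ hj
        rcases hj.lt_or_gt with hlt | hgt
        · rw [ih j hlt, Pi.zero_apply, mul_zero]
        · rw [hzero k.castSucc j hgt, zero_mul]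
      · exact fun h => absurd (Finset.mem_univ _) h

theorem finrank_eigenspace_le_one_of_superdiagonal_ne_zero {K : Type*} [Field K] {n : ℕ}
    {M : Matrix (Fin (n + 1)) (Fin (n + 1)) K}
    (hzero : ∀ i j : Fin (n + 1), (i : ℕ) + 1 < j → M i j = 0)
    (hsuper : ∀ i : Fin n, M i.castSucc i.succ ≠ 0) (μ : K) :
    Module.finrank K (Module.End.eigenspace (toLin' M) μ) ≤ 1 := by
  let firstCoord : Module.End.eigenspace (toLin' M) μ →ₗ[K] K :=
    LinearMap.proj 0 ∘ₗ Submodule.subtype _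
  have injective : Function.Injective firstCoord := by
    refine (injective_iff_map_eq_zero _).mpr fun v hv => Subtype.ext ?_
    exact eq_zero_of_mulVec_eq_smul_of_apply_zero hzero hsuper
      (Module.End.mem_eigenspace_iff.mp v.2) hv
  simpa only [Module.finrank_self] using LinearMap.finrank_le_finrank_of_injective injective

theorem eigenvalues_injective_of_finrank_eigenspace_le_one {𝕜 n : Type*} [RCLike 𝕜] [Fintype n]
    [DecidableEq n] {A : Matrix n n 𝕜} (hA : A.IsHermitian)
    (h : ∀ μ : 𝕜, Module.finrank 𝕜 (Module.End.eigenspace (toLin' A) μ) ≤ 1) :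
    Function.Injective hA.eigenvalues := by
  intro i j hij
  let E := Module.End.eigenspace (toLin' A) (hA.eigenvalues i : 𝕜)
  let v : {k // hA.eigenvalues k = hA.eigenvalues i} → E := fun k =>
    ⟨hA.eigenvectorBasis k, Module.End.mem_eigenspace_iff.mpr <| by
      rw [toLin'_apply, hA.mulVec_eigenvectorBasis, k.2, RCLike.real_smul_eq_coe_smul (K := 𝕜)]⟩
  have linearIndependent_v : LinearIndependent 𝕜 v := by
    refine LinearIndependent.of_comp E.subtype ?_
    exact (hA.eigenvectorBasis.toBasis.linearIndependent.map'
      (WithLp.linearEquiv 2 𝕜 (n → 𝕜)).toLinearMap (LinearEquiv.ker _)).comp _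
      Subtype.val_injective
  have := Fintype.card_le_one_iff_subsingleton.mp
    (linearIndependent_v.fintype_card_le_finrank.trans (h _))
  exact congrArg Subtype.val (this.elim ⟨i, rfl⟩ ⟨j, hij.symm⟩)

theorem finrank_eigenspace_tridiagonal_le_one {K : Type*} [Field K] {n : ℕ} {d u s : ℕ → K}
    (hu : ∀ i, i + 1 < n → u i ≠ 0) (μ : K) :
    Module.finrank K (Module.End.eigenspace (toLin' (tridiagonal n d u s)) μ) ≤ 1 := by
  cases n with
  | zero => simp [Module.finrank_zero_of_subsingleton]
  | succ n =>
    refine finrank_eigenspace_le_one_of_superdiagonal_ne_zero (fun i j hij => ?_) (fun i => ?_) μ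
    · simp only [tridiagonal, of_apply]
      grind
    · simpa [tridiagonal, Fin.ext_iff] using hu i (by omega)

theorem card_roots_charpoly_tridiagonal {n : ℕ} {u s : ℕ → ℝ} (d : ℕ → ℝ)
    (h : ∀ i, i + 1 < n → 0 < u i * s (i + 1)) :
    (tridiagonal n d u s).charpoly.roots.toFinset.card = n := by
  let r (i : ℕ) : ℝ := √(u i * s (i + 1))
  have hr (i : ℕ) (hi : i + 1 < n) : u i * s (i + 1) = r i * r (i + 1 - 1) :=
    (Real.mul_self_sqrt (h i hi).le).symm
  have hH : (tridiagonal n d r fun i => r (i - 1)).IsHermitian :=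
    isHermitian_iff_isSymm.mpr (isSymm_tridiagonal n d r)
  have injective : Function.Injective hH.eigenvalues :=
    eigenvalues_injective_of_finrank_eigenspace_le_one hH
      (finrank_eigenspace_tridiagonal_le_one fun i hi => (Real.sqrt_pos.mpr (h i hi)).ne')
  rw [charpoly_tridiagonal_congr (s' := fun i => r (i - 1)) d hr, hH.roots_charpoly_eq_eigenvalues,
    Multiset.toFinset_card_of_nodup
      (Finset.univ.nodup.map (RCLike.ofReal_injective.comp injective)),
    Multiset.card_map, Finset.card_val, Finset.card_fin]

end SimpleSpectrum

section Pencil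

variable {R : Type*} [CommRing R]

/-- The matrix `𝒢_l + r • 1` of the paper, homogenized by `θ = X 1`, at `μ = 1` and `r = 1 + X 0`,
with weights `w i` for which the paper has `w i = i` (its row `j` being the row `i = j - 1`). -/
noncomputable def antidiagonalPencil (w : ℕ → R) (l : ℕ) :
    Matrix (Fin l) (Fin l) (MvPolynomial (Fin 2) R) :=
  of fun i j =>
    (if (i : ℕ) + (j : ℕ) = l - 1 then 1 else 0)
    + (if (i : ℕ) + (j : ℕ) = l then -(C (w i)) * X 1 else 0)
    + (if i = j then 1 + X 0 else 0)

/-- The tridiagonal matrix whose determinant defines the tangent cone of the curve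
`det (antidiagonalPencil w (m + m)) = 0` at its singular point `a = θ = 0`. -/
noncomputable def tangentConeMatrix (w : ℕ → R) (m : ℕ) :
    Matrix (Fin m) (Fin m) (MvPolynomial (Fin 2) R) :=
  tridiagonal m (fun i => 2 * X 0 - (if i = 0 then C (w m) * X 1 else 0))
    (fun i => C (w (m + 1 + i)) * X 1) (fun i => C (w (m - i)) * X 1)

/-- The indexing of `Fin (m + m)` by the pairs of rows `m - 1 - p`, `m + p` which the antidiagonal
interchanges. -/
def antidiagonalPairing (m : ℕ) : Fin m ⊕ Fin m ≃ Fin (m + m) :=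
  (Equiv.sumCongr Fin.revPerm (Equiv.refl _)).trans finSumFinEquiv

theorem antidiagonalPairing_inl {m : ℕ} (p : Fin m) :
    (antidiagonalPairing m (Sum.inl p) : ℕ) = m - (p + 1) := by
  simp [antidiagonalPairing]

theorem antidiagonalPairing_inr {m : ℕ} (p : Fin m) :
    (antidiagonalPairing m (Sum.inr p) : ℕ) = m + p := by
  simp [antidiagonalPairing, add_comm]

-- Transposed because the weights belong to the rows of the pencil: without it, the lower right
-- block after the elimination is the transpose of `tangentConeMatrix`.
theorem antidiagonalPencil_transpose_submatrix (w : ℕ → R) (m : ℕ) :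
    (antidiagonalPencil w (m + m))ᵀ.submatrix (antidiagonalPairing m) (antidiagonalPairing m) =
      fromBlocks
        (tridiagonal m (fun _ => 1 + X 0) 0 0)
        (tridiagonal m 1 (fun i => -(C (w (m + 1 + i)) * X 1)) 0)
        (tridiagonal m 1 0 (fun i => -(C (w (m - i)) * X 1)))
        (tridiagonal m (fun i => 1 + X 0 - (if i = 0 then C (w m) * X 1 else 0)) 0 0) := by
  ext1 (p | p) (q | q) <;>
  · simp only [submatrix_apply, transpose_apply, antidiagonalPencil, of_apply,
      antidiagonalPairing_inl, antidiagonalPairing_inr, EmbeddingLike.apply_eq_iff_eq,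
      Sum.inl.injEq, Sum.inr.injEq, reduceCtorEq, fromBlocks_apply₁₁, fromBlocks_apply₁₂,
      fromBlocks_apply₂₁, fromBlocks_apply₂₂, tridiagonal, Pi.zero_apply, Pi.one_apply, ite_self]
    grind

theorem det_antidiagonalPencil (w : ℕ → R) (m : ℕ) :
    (antidiagonalPencil w (m + m)).det =
      (fromBlocks
        (tridiagonal m (fun _ => 1 + X 0) 0 0)
        (tridiagonal m (fun _ => -X 0) (fun i => -(C (w (m + 1 + i)) * X 1)) 0)
        (tridiagonal m (fun _ => -X 0) 0 (fun i => -(C (w (m - i)) * X 1)))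
        (tangentConeMatrix w m)).det := by
  rw [← det_transpose, ← det_submatrix_equiv_self (antidiagonalPairing m),
    antidiagonalPencil_transpose_submatrix, ← det_fromBlocks_sub_sub]
  simp only [tridiagonal_sub, tridiagonal_add, tangentConeMatrix]
  congr 3 <;> ext1 i <;>
  · simp only [Pi.add_apply, Pi.sub_apply, Pi.zero_apply, Pi.one_apply]
    ring

theorem isHomogeneous_tangentConeMatrix (w : ℕ → R) {m : ℕ} (i j : Fin m) :
    (tangentConeMatrix w m i j).IsHomogeneous 1 := by
  refine isHomogeneous_tridiagonal (fun i => ?_) (fun i => isHomogeneous_C_mul_X _ _)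
    (fun i => isHomogeneous_C_mul_X _ _) i j
  rw [two_mul]
  refine ((isHomogeneous_X _ _).add (isHomogeneous_X _ _)).sub ?_
  split_ifs
  exacts [isHomogeneous_C_mul_X _ _, isHomogeneous_zero _ _ _]

theorem isHomogeneous_tridiagonal_neg_X (c : ℕ → R) {m : ℕ} (i j : Fin m) :
    (tridiagonal m (fun _ => -X 0) (fun i => -(C (c i) * X 1)) 0 i j :
      MvPolynomial (Fin 2) R).IsHomogeneous 1 :=
  isHomogeneous_tridiagonal (fun _ => (isHomogeneous_X _ _).neg)
    (fun _ => (isHomogeneous_C_mul_X _ _).neg) (fun _ => isHomogeneous_zero _ _ _) i j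

theorem homogeneousComponent_det_antidiagonalPencil_of_lt (w : ℕ → R) {m k : ℕ} (hk : k < m) :
    homogeneousComponent k (antidiagonalPencil w (m + m)).det = 0 := by
  rw [det_antidiagonalPencil]
  exact homogeneousComponent_det_fromBlocks_of_lt (isHomogeneous_tridiagonal_neg_X _)
    (isHomogeneous_tangentConeMatrix w) (by simpa only [one_mul, Fintype.card_fin] using hk)

theorem homogeneousComponent_det_antidiagonalPencil (w : ℕ → R) (m : ℕ) :
    homogeneousComponent m (antidiagonalPencil w (m + m)).det = (tangentConeMatrix w m).det := by
  have constantCoeff_lower (i j : Fin m) : constantCoeff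
      (tridiagonal m (fun _ => -X 0) 0 (fun i => -(C (w (m - i)) * X (R := R) (1 : Fin 2))) i j) =
      0 := by
    simp only [tridiagonal, of_apply]
    split_ifs <;> simp
  have h := homogeneousComponent_det_fromBlocks
    (A₁₁ := tridiagonal m (fun _ => 1 + X 0) 0 0)
    (isHomogeneous_tridiagonal_neg_X (m := m) fun i => w (m + 1 + i)) constantCoeff_lower
    (isHomogeneous_tangentConeMatrix w)
  rw [← det_antidiagonalPencil, one_mul, Fintype.card_fin] at h
  simpa [tridiagonal_zero_zero] using h

end Pencil

theorem exists_finset_eval_det_tangentConeMatrix {m : ℕ} {w : ℕ → ℝ}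
    (hw : ∀ j, 0 < j → j < m → 0 < w (m + j) * w (m - j)) {t : ℝ} (ht : t ≠ 0) :
    ∃ S : Finset ℝ, S.card = m ∧ ∀ x : ℝ,
      eval (fun v : Fin 2 => if v = 0 then x else t) (tangentConeMatrix w m).det = 0 ↔ x ∈ S := by
  let T := tridiagonal m (fun i => if i = 0 then w m * t else 0)
    (fun i => -(w (m + 1 + i) * t)) (fun i => -(w (m - i) * t))
  have eval_det (x : ℝ) : eval (fun v : Fin 2 => if v = 0 then x else t)
      (tangentConeMatrix w m).det = T.charpoly.eval (2 * x) := by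
    rw [eval_charpoly_tridiagonal, RingHom.map_det, RingHom.mapMatrix_apply, tangentConeMatrix,
      map_tridiagonal _ _ _ _ (map_zero _)]
    congr 2 <;> ext i <;> simp only [Function.comp_apply, map_sub, map_mul,
      map_ofNat, apply_ite (eval _), map_zero, eval_X, eval_C, if_true, one_ne_zero, if_false,
      neg_neg]
  have card_roots : T.charpoly.roots.toFinset.card = m :=
    card_roots_charpoly_tridiagonal _ fun i hi => by
      calc 0 < w (m + (i + 1)) * w (m - (i + 1)) * t ^ 2 :=
            mul_pos (hw (i + 1) i.succ_pos hi) (sq_pos_of_ne_zero ht)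
        _ = -(w (m + 1 + i) * t) * -(w (m - (i + 1)) * t) := by
            rw [← add_assoc, add_right_comm]
            ring
  refine ⟨T.charpoly.roots.toFinset.map (Equiv.mulLeft₀ (2 : ℝ) two_ne_zero).symm.toEmbedding,
    by rw [Finset.card_map, card_roots], fun x => ?_⟩
  rw [Finset.mem_map_equiv, Multiset.mem_toFinset, Polynomial.mem_roots (charpoly_monic T).ne_zero,
    eval_det]
  rfl

theorem stmt18_general {l : ℕ} (heven : Even l) (w : ℕ → ℝ)
    (hw : ∀ j, 0 < j → j < l / 2 → 0 < w (l / 2 + j) * w (l / 2 - j)) :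
    (∀ k < l / 2, homogeneousComponent k (antidiagonalPencil w l).det = 0) ∧
    homogeneousComponent (l / 2) (antidiagonalPencil w l).det =
      (tangentConeMatrix w (l / 2)).det ∧
    ∀ t : ℝ, t ≠ 0 → ∃ S : Finset ℝ, S.card = l / 2 ∧ ∀ x : ℝ,
      eval (fun v : Fin 2 => if v = 0 then x else t) (tangentConeMatrix w (l / 2)).det = 0 ↔
        x ∈ S := by
  have vanishing (k : ℕ) (hk : k < l / 2) :=
    homogeneousComponent_det_antidiagonalPencil_of_lt w hk
  have leading := homogeneousComponent_det_antidiagonalPencil w (l / 2)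
  rw [← two_mul, Nat.two_mul_div_two_of_even heven] at vanishing leading
  exact ⟨vanishing, leading, fun _ => exists_finset_eval_det_tangentConeMatrix hw⟩

/-- for even l, the lowest homogeneous part in (a,θ) (X 0 = a,
X 1 = θ) of the homogenized determinant det(𝒢_l + r·Id) with μ = 1, r = 1+a
(the constants -(j-1) below the antidiagonal being homogenized to -(j-1)θ)
equals the determinant of the (l/2)×(l/2) tridiagonal matrix with diagonal
(2a - (l/2)θ, 2a, …, 2a), superdiagonal ((l/2)+1)θ, …, (l-1)θ and subdiagonal
((l/2)-1)θ, …, θ; moreover for each fixed θ > 0 this determinant, as a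
polynomial in a, has l/2 distinct real roots. -/
theorem stmt18 (l : ℕ) (hl : 2 ≤ l) (heven : Even l) :
    (∀ k : ℕ, k < l / 2 →
      MvPolynomial.homogeneousComponent k
        ((Matrix.of fun i j : Fin l =>
          ((if (i : ℕ) + (j : ℕ) = l - 1 then 1 else 0)
          + (if (i : ℕ) + (j : ℕ) = l then -(C (((i : ℕ) : ℕ) : ℝ)) * X 1 else 0)
          + (if i = j then 1 + X 0 else 0) : MvPolynomial (Fin 2) ℝ)).det) = 0) ∧
    MvPolynomial.homogeneousComponent (l / 2)
      ((Matrix.of fun i j : Fin l =>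
        ((if (i : ℕ) + (j : ℕ) = l - 1 then 1 else 0)
        + (if (i : ℕ) + (j : ℕ) = l then -(C (((i : ℕ) : ℕ) : ℝ)) * X 1 else 0)
        + (if i = j then 1 + X 0 else 0) : MvPolynomial (Fin 2) ℝ)).det)
    = (Matrix.of fun i j : Fin (l / 2) =>
        (if i = j then
          2 * X 0 - (if (i : ℕ) = 0 then C (((l / 2 : ℕ)) : ℝ) * X 1 else 0)
        else if (i : ℕ) + 1 = (j : ℕ) then C (((l / 2 + 1 + (i : ℕ) : ℕ)) : ℝ) * X 1
        else if (j : ℕ) + 1 = (i : ℕ) then C (((l / 2 - (i : ℕ) : ℕ)) : ℝ) * X 1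
        else 0 : MvPolynomial (Fin 2) ℝ)).det ∧
    ∀ t : ℝ, 0 < t → ∃ S : Finset ℝ, S.card = l / 2 ∧
      ∀ x : ℝ,
        MvPolynomial.eval (fun v : Fin 2 => if v = 0 then x else t)
          ((Matrix.of fun i j : Fin (l / 2) =>
            (if i = j then
              2 * X 0 - (if (i : ℕ) = 0 then C (((l / 2 : ℕ)) : ℝ) * X 1 else 0)
            else if (i : ℕ) + 1 = (j : ℕ) then C (((l / 2 + 1 + (i : ℕ) : ℕ)) : ℝ) * X 1
            else if (j : ℕ) + 1 = (i : ℕ) then C (((l / 2 - (i : ℕ) : ℕ)) : ℝ) * X 1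
            else 0 : MvPolynomial (Fin 2) ℝ)).det) = 0 ↔ x ∈ S := by
  have h := stmt18_general heven Nat.cast fun j _ hj =>
    mul_pos (Nat.cast_pos.mpr (by omega)) (Nat.cast_pos.mpr (by omega))
  exact ⟨h.1, h.2.1, fun t ht => h.2.2 t ht.ne'⟩
end
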